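/- There is an E-unitary one-relator inverse monoid Inv⟨A | w = 1⟩ with undecidable word problem: there exist n : ℕ and a word w ∈ FreeMonoid ((Fin n) × Bool) such that, letting σ be the congruence generated by the Vagner congruence ν together with the pair (w, 1), (i) the predicate on pairs of words (u, v) given by 'σ relates u and v' is not ComputablePred, and (ii) the quotient monoid is E-unitary: for every word u, if FreeGroup.mk u lies in the normal closure of {FreeGroup.mk w} in FreeGroup (Fin n) (equivalently, the image of u in the maximal group image PresentedGroup {FreeGroup.mk w} is the identity), then σ relates u * u to u. -/

import Mathlib

/-- The formal inverse of a word over `B`: reverse the word and negate the `Bool` component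
of each letter. -/
def wInv {B : Type*} (w : FreeMonoid (B × Bool)) : FreeMonoid (B × Bool) :=
  FreeMonoid.ofList (((FreeMonoid.toList w).map fun p => (p.1, !p.2)).reverse)

/-- The generating relation of the Vagner congruence: `w w⁻¹ w ~ w` and
`w w⁻¹ u u⁻¹ ~ u u⁻¹ w w⁻¹` for all words `u, w`. -/
def vagnerRel (B : Type*) : FreeMonoid (B × Bool) → FreeMonoid (B × Bool) → Prop :=
  fun x y =>
    (∃ w, x = w * wInv w * w ∧ y = w) ∨
    (∃ u w, x = w * wInv w * (u * wInv u) ∧ y = u * wInv u * (w * wInv w))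

/-- The congruence defining the one-relator inverse monoid `Inv⟨Fin n | w = 1⟩`: generated by
the Vagner congruence together with the single pair `(w, 1)`. -/
def oneRelatorInvCon {n : ℕ} (w : FreeMonoid (Fin n × Bool)) : Con (FreeMonoid (Fin n × Bool)) :=
  conGen (fun x y => vagnerRel (Fin n) x y ∨ (x = w ∧ y = 1))

instance {α : Type*} [Primcodable α] : Primcodable (FreeMonoid α) :=
  Primcodable.ofEquiv (List α) FreeMonoid.toList

/-
A counter program with undecidable halting problem acts, through the exponents of the primes in an
integer, as a finite set of rules `p * k + r ↦ q * k + s`. The reachability `n ↦* τ` for such rules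
is simulated by a finite automaton over `G = ⟨a, z | [a, z a z⁻¹] = 1⟩`: the relator makes each of
the conjugates `zⁱ a z⁻ⁱ`, `i < 4`, commute with the next, and sending them to the translations of
`F(p, q) × F(p, q)` by `(p, 1)`, `(1, q)`, `(q, 1)` and `(1, p)` turns an accepting run into an
equation between positive words, of the kind used for Post's correspondence problem. Adjoining the
states of the automaton to `G` as free generators, `n ↦* τ` becomes the membership of a word in a
finitely generated submonoid of a one-relator group `⟨A | r = 1⟩`. To refute membership, let this
group permute `G × ℤ` in such a way that the submonoid preserves the half `G × ℤ_{<0}` but the given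
word does not.

By Gray's construction, this membership is decided by the word problem of the inverse monoid on
`A ∪ {t}` with the single relation `∏ s s⁻¹ * r = 1`, where `s` runs over the letters of `A` and
their inverses, `t`, and `t v t⁻¹` for the generators `v` of the submonoid: each such `s` becomes a
right unit, and `t v t⁻¹` is a right unit exactly when `v` lies in the submonoid. The maximal group
image is the free product of `⟨A | r = 1⟩` with `⟨t⟩`, so a word that is trivial there cancels by
reducing `t t⁻¹` and `t⁻¹ t`, which are idempotents in the inverse monoid; hence it is idempotent.
-/

namespace OneRelatorInverseMonoid

open Function Relation

/-! ### Counter programs -/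

/-- The instructions of a counter machine whose registers are indexed by `ℕ`. -/
inductive Instr : Type
  | skip : Instr
  | inc (i : ℕ) : Instr
  | dec (i : ℕ) : Instr
  | tst (i : ℕ) : Instr

/-- The effect of an instruction on the registers. `dec i` is blocked when register `i` is zero,
and `tst i` when it is not. -/
def Instr.Rel : Instr → (ℕ → ℕ) → (ℕ → ℕ) → Prop
  | .skip, s, s' => s' = s
  | .inc i, s, s' => s' = update s i (s i + 1)
  | .dec i, s, s' => s = update s' i (s' i + 1)
  | .tst i, s, s' => s i = 0 ∧ s' = s

/-- Nondeterministic counter programs: regular expressions over the instructions. -/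
inductive Prog : Type
  | instr (I : Instr) : Prog
  | seq (P Q : Prog) : Prog
  | star (P : Prog) : Prog

namespace Prog

/-- The input-output relation of a program. -/
def Rel : Prog → (ℕ → ℕ) → (ℕ → ℕ) → Prop
  | instr I => I.Rel
  | seq P Q => Comp P.Rel Q.Rel
  | star P => ReflTransGen P.Rel

/-- Started in `s`, the program has `t` as its unique final state. -/
def Runs (P : Prog) (s t : ℕ → ℕ) : Prop := ∀ s', P.Rel s s' ↔ s' = t

/-- Decrement register `i` and execute `P`, until register `i` is zero. -/
def loop (i : ℕ) (P : Prog) : Prog := seq (star (seq (instr (.dec i)) P)) (instr (.tst i))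

/-- Set register `i` to zero. -/
def clear (i : ℕ) : Prog := loop i (instr .skip)

/-- Add register `i` to register `o` and set register `i` to zero. -/
def move (i o : ℕ) : Prog := loop i (instr (.inc o))

/-- Add register `i` to register `o`, using register `c` as scratch space. -/
def copy (i o c : ℕ) : Prog := seq (loop i (seq (instr (.inc o)) (instr (.inc c)))) (move c i)

variable {P Q : Prog} {s t r : ℕ → ℕ} {i o c k : ℕ}

theorem Runs.congr (h : P.Runs s t) (e : t = r) : P.Runs s r := e ▸ h

theorem runs_skip (s : ℕ → ℕ) : (instr .skip).Runs s s := fun _ => Iff.rfl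

theorem runs_inc (i : ℕ) (s : ℕ → ℕ) : (instr (.inc i)).Runs s (update s i (s i + 1)) :=
  fun _ => Iff.rfl

theorem runs_dec (h : s i = k + 1) : (instr (.dec i)).Runs s (update s i k) := by
  intro s'
  constructor
  · intro (e : s = update s' i (s' i + 1))
    obtain rfl : s' i = k := by simpa [e] using h
    simp [e]
  · rintro rfl
    change s = _
    simp [← h]

theorem Runs.seq (hP : P.Runs s t) (hQ : Q.Runs t r) : (seq P Q).Runs s r := by
  intro s'
  constructor
  · rintro ⟨x, hx, hy⟩
    rw [hP] at hx
    exact (hQ s').1 (hx ▸ hy)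
  · rintro rfl
    exact ⟨t, (hP t).2 rfl, (hQ _).2 rfl⟩

theorem runs_loop_zero (h : s i = 0) : (loop i P).Runs s s := by
  intro s'
  constructor
  · rintro ⟨x, hx, -, rfl⟩
    obtain rfl | ⟨y, ⟨z, hz : s = _, -⟩, -⟩ := hx.cases_head
    · rfl
    · simp [hz] at h
  · rintro rfl
    exact ⟨_, .refl, h, rfl⟩

theorem Runs.loop_succ (h : s i = k + 1) (hP : P.Runs (update s i k) t)
    (ht : (loop i P).Runs t r) : (loop i P).Runs s r := by
  have body : (Prog.seq (instr (.dec i)) P).Runs s t := (runs_dec h).seq hP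
  intro s'
  rw [← ht s']
  constructor
  · rintro ⟨x, hx, h0, rfl⟩
    obtain rfl | ⟨y, hy, hyx⟩ := hx.cases_head
    · omega
    · obtain rfl := (body y).1 hy
      exact ⟨_, hyx, h0, rfl⟩
  · rintro ⟨x, hx, h0, rfl⟩
    exact ⟨_, .head ((body t).2 rfl) hx, h0, rfl⟩

theorem runs_loop (s : ℕ → ℕ → ℕ) (hi : ∀ k, s k i = k) :
    ∀ n, (∀ k < n, P.Runs (update (s (k + 1)) i k) (s k)) → (loop i P).Runs (s n) (s 0)
  | 0, _ => runs_loop_zero (hi 0)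
  | n + 1, h => (h n n.lt_succ_self).loop_succ (hi _)
      (runs_loop s hi n fun k hk => h k (hk.trans n.lt_succ_self))

theorem runs_clear (i : ℕ) (s : ℕ → ℕ) : (clear i).Runs s (update s i 0) := by
  have := runs_loop (i := i) (P := instr .skip) (fun k => update s i k) (by simp) (s i)
    fun k _ => (runs_skip _).congr (by simp)
  simpa [clear] using this

theorem runs_move (h : i ≠ o) (s : ℕ → ℕ) :
    (move i o).Runs s (update (update s i 0) o (s o + s i)) := by
  have := runs_loop (i := i) (P := instr (.inc o))
    (fun k => update (update s i k) o (s o + (s i - k))) (by simp [h]) (s i)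
    fun k hk => (runs_inc _ _).congr (by grind)
  simpa [move] using this

theorem runs_copy (hio : i ≠ o) (hic : i ≠ c) (hoc : o ≠ c) (hc : s c = 0) :
    (copy i o c).Runs s (update s o (s o + s i)) := by
  have h := runs_loop (i := i) (P := .seq (instr (.inc o)) (instr (.inc c)))
    (fun k => update (update (update s i k) o (s o + (s i - k))) c (s i - k))
    (by simp [hio, hic]) (s i)
    fun k hk => ((runs_inc _ _).seq (runs_inc _ _)).congr (by grind)
  have hstart : update (update (update s i (s i)) o (s o + (s i - s i))) c (s i - s i) = s := by
    grind
  rw [hstart] at h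
  exact (h.seq (runs_move hic.symm _)).congr (by grind)

end Prog

/-! ### Primitive recursive functions are computed by counter programs -/

/-- The function `f` is computed by counter programs, with arguments in any distinct registers
`ins` and result in any other register `o` initially zero, leaving all other registers as they
were, provided the registers from `B` on are zero. -/
def Compilable {n : ℕ} (f : List.Vector ℕ n → ℕ) : Prop :=
  ∀ (ins : Fin n → ℕ) (o B : ℕ), Injective ins → (∀ i, ins i < B) → o < B → (∀ i, ins i ≠ o) →
    ∃ P : Prog, ∀ s : ℕ → ℕ, (∀ j, B ≤ j → s j = 0) → s o = 0 →
      P.Runs s (update s o (f (List.Vector.ofFn fun i => s (ins i))))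

/-- The state obtained from `s` by storing `x` in the registers `B, …, B + n - 1`. -/
def writeBlock {n : ℕ} (s : ℕ → ℕ) (B : ℕ) (x : Fin n → ℕ) : ℕ → ℕ := fun j =>
  if h : B ≤ j ∧ j < B + n then x ⟨j - B, by omega⟩ else s j

section writeBlock

variable {n : ℕ} (s : ℕ → ℕ) {B j : ℕ}

theorem writeBlock_of_lt (x : Fin n → ℕ) (h : j < B) : writeBlock s B x j = s j :=
  dif_neg (by omega)

theorem writeBlock_of_ge (x : Fin n → ℕ) (h : B + n ≤ j) : writeBlock s B x j = s j :=
  dif_neg (by omega)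

theorem writeBlock_add (x : Fin n → ℕ) (i : Fin n) : writeBlock s B x (B + i) = x i := by
  simp [writeBlock]

theorem writeBlock_zero (x : Fin 0 → ℕ) : writeBlock s B x = s := by
  funext j
  exact dif_neg (by omega)

theorem writeBlock_succ (x : Fin (n + 1) → ℕ) :
    writeBlock s B x =
      update (writeBlock s B fun i => x i.castSucc) (B + n) (x (Fin.last n)) := by
  funext j
  by_cases hj : j = B + n
  · subst hj
    simpa using writeBlock_add s x (Fin.last n)
  · have : (B ≤ j ∧ j < B + (n + 1)) ↔ (B ≤ j ∧ j < B + n) := by omega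
    simp [writeBlock, hj, this]

theorem writeBlock_update_writeBlock (hs : ∀ j, B ≤ j → s j = 0) (x : Fin n → ℕ) {o : ℕ}
    (ho : o < B) (a : ℕ) :
    writeBlock (update (writeBlock s B x) o a) B (0 : Fin n → ℕ) = update s o a := by
  funext j
  by_cases h : B ≤ j ∧ j < B + n
  · have : j ≠ o := by omega
    simp [writeBlock, h, this, hs j h.1]
  · simp [writeBlock, update_apply, h]

end writeBlock

theorem exists_runs_writeBlock_zero (B n : ℕ) :
    ∃ P : Prog, ∀ s, P.Runs s (writeBlock s B (0 : Fin n → ℕ)) := by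
  induction n with
  | zero => exact ⟨.instr .skip, fun s => (Prog.runs_skip s).congr (writeBlock_zero s _).symm⟩
  | succ n ih =>
    obtain ⟨P, hP⟩ := ih
    exact ⟨.seq P (.clear (B + n)), fun s =>
      ((hP s).seq (Prog.runs_clear _ _)).congr (writeBlock_succ s 0).symm⟩

theorem exists_runs_writeBlock {n k : ℕ} (g : Fin n → List.Vector ℕ k → ℕ)
    (hg : ∀ i, Compilable (g i)) {ins : Fin k → ℕ} (hinj : Injective ins) {B : ℕ}
    (hins : ∀ i, ins i < B) :
    ∃ P : Prog, ∀ s : ℕ → ℕ, (∀ j, B ≤ j → s j = 0) →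
      P.Runs s (writeBlock s B fun i => g i (List.Vector.ofFn fun i => s (ins i))) := by
  induction n with
  | zero => exact ⟨.instr .skip, fun s _ => (Prog.runs_skip s).congr (writeBlock_zero s _).symm⟩
  | succ n ih =>
    obtain ⟨P, hP⟩ := ih (fun i => g i.castSucc) fun i => hg _
    obtain ⟨Q, hQ⟩ := hg (Fin.last n) ins (B + n) (B + n + 1) hinj
      (fun i => by have := hins i; omega) (by omega) (fun i => by have := hins i; omega)
    refine ⟨.seq P Q, fun s hs => ((hP s hs).seq (hQ _ (fun j hj => ?_) ?_)).congr ?_⟩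
    · rw [writeBlock_of_ge s _ (by omega), hs j (by omega)]
    · rw [writeBlock_of_ge s _ le_rfl, hs _ (by omega)]
    · simp only [writeBlock_succ, writeBlock_of_lt s _ (hins _)]

theorem Compilable.comp {n k : ℕ} {f : List.Vector ℕ n → ℕ} (hf : Compilable f)
    {g : Fin n → List.Vector ℕ k → ℕ} (hg : ∀ i, Compilable (g i)) :
    Compilable fun v => f (List.Vector.ofFn fun i => g i v) := by
  intro ins o B hinj hins ho _
  obtain ⟨P, hP⟩ := exists_runs_writeBlock g hg hinj hins
  obtain ⟨Q, hQ⟩ := hf (fun i => B + i) o (B + n) (fun i j h => by simpa [Fin.ext_iff] using h)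
    (fun i => by omega) (by omega) (fun i => by omega)
  obtain ⟨R, hR⟩ := exists_runs_writeBlock_zero B n
  refine ⟨.seq P (.seq Q R), fun s hs hso =>
    ((hP s hs).seq ((hQ _ (fun j hj => ?_) ?_).seq (hR _))).congr ?_⟩
  · rw [writeBlock_of_ge s _ hj, hs j (by omega)]
  · rw [writeBlock_of_lt s _ ho, hso]
  · simp only [writeBlock_update_writeBlock s hs _ ho, writeBlock_add]

/-- The loop of a primitive recursion over register `i`: register `b` counts up from zero, `o`
accumulates the result, and `Q` stores in `c` the next value of `o`. Register `i` is restored. -/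
def Prog.recLoop (i o b c : ℕ) (Q : Prog) : Prog :=
  .seq (.loop i (.seq Q (.seq (.clear o) (.seq (.move c o) (.instr (.inc b)))))) (.move b i)

theorem Prog.runs_recLoop {i o b c : ℕ} {Q : Prog} {s : ℕ → ℕ} {F : ℕ → ℕ}
    (hdist : [i, o, b, c].Nodup) (hb : s b = 0) (hc : s c = 0)
    (hQ : ∀ k m, k + m < s i → Q.Runs (update (update (update s i k) b m) o (F m))
      (update (update (update (update s i k) b m) o (F m)) c (F (m + 1)))) :
    (recLoop i o b c Q).Runs (update s o (F 0)) (update s o (F (s i))) := by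
  simp only [List.nodup_cons, List.mem_cons, List.not_mem_nil, or_false, not_or] at hdist
  let st : ℕ → ℕ → ℕ := fun k =>
    update (update (update s i k) b (s i - k)) o (F (s i - k))
  have hloop := runs_loop (i := i)
    (P := .seq Q (.seq (.clear o) (.seq (.move c o) (.instr (.inc b)))))
    st (by grind) (s i) fun k hk => by
      have hQk := hQ k (s i - (k + 1)) (by omega)
      have hstep : s i - k = s i - (k + 1) + 1 := by omega
      rw [show update (st (k + 1)) i k = update (update (update s i k) b (s i - (k + 1))) o
        (F (s i - (k + 1))) by grind]
      refine (hQk.seq ((runs_clear _ _).seq ((runs_move (by grind) _).seq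
        (runs_inc _ _)))).congr ?_
      funext j
      simp only [st, hstep, update_apply]
      grind
  have hstart : st (s i) = update s o (F 0) := by grind
  rw [hstart] at hloop
  refine (hloop.seq (runs_move (Ne.symm hdist.1.2.1) _)).congr ?_
  funext j
  simp only [st, update_apply]
  grind

theorem Compilable.prec {n : ℕ} {f : List.Vector ℕ n → ℕ} {g : List.Vector ℕ (n + 2) → ℕ}
    (hf : Compilable f) (hg : Compilable g) :
    Compilable fun v : List.Vector ℕ (n + 1) =>
      v.head.rec (f v.tail) fun y IH => g (y ::ᵥ IH ::ᵥ v.tail) := by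
  intro ins o B hinj hins ho hne
  have hins0 : ∀ i : Fin n, ins i.succ ≠ ins 0 := fun i => hinj.ne (Fin.succ_ne_zero i)
  have hinsB : ∀ i : Fin n, ins i.succ ≠ B := fun i => (hins _).ne
  have hinso : ∀ i : Fin n, ins i.succ ≠ o := fun i => hne _
  have hinj' := hinj.comp (Fin.succ_injective n)
  obtain ⟨P, hP⟩ := hf (fun i => ins i.succ) o B hinj' (fun i => hins _) ho hinso
  let insQ : Fin (n + 2) → ℕ := Fin.cons B (Fin.cons o fun i => ins i.succ)
  have hinsQ : ∀ i, insQ i < B + 1 := by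
    simpa [insQ, Fin.forall_fin_succ] using ⟨ho.le, fun i => (hins _).le⟩
  obtain ⟨Q, hQ⟩ := hg insQ (B + 1) (B + 2)
    (Fin.cons_injective_iff.2 ⟨by simpa [Fin.exists_fin_succ, ho.ne'] using hinsB,
      Fin.cons_injective_iff.2 ⟨by simpa using hinso, hinj'⟩⟩)
    (fun i => (hinsQ i).trans (Nat.lt_succ_self _)) (Nat.lt_succ_self _) fun i => (hinsQ i).ne
  refine ⟨.seq P (.recLoop (ins 0) o B (B + 1) Q), fun s hs hso => ?_⟩
  set v : List.Vector ℕ n := List.Vector.ofFn fun i => s (ins i.succ) with hv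
  let F : ℕ → ℕ := fun m => m.rec (f v) fun y IH => g (y ::ᵥ IH ::ᵥ v)
  suffices h : Prog.Runs (.recLoop (ins 0) o B (B + 1) Q) (update s o (F 0))
      (update s o (F (s (ins 0)))) from ((hP s hs hso).seq h).congr rfl
  have h0 := hins 0
  refine Prog.runs_recLoop (by simp [hne, ho.ne, h0.ne]; omega) (hs _ le_rfl) (hs _ (by omega))
    fun k m _ => ?_
  refine (hQ _ (fun j hj => ?_) ?_).congr ?_
  · simp [show j ≠ o by omega, show j ≠ B by omega, show j ≠ ins 0 by omega, hs j (by omega)]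
  · simp [show B + 1 ≠ o by omega, show B + 1 ≠ ins 0 by omega, hs (B + 1) (by omega)]
  · congr 1
    simp [F, insQ, List.Vector.ofFn, ho.ne', hv, hins0, hinsB, hinso]

theorem compilable_of_primrec {n : ℕ} {f : List.Vector ℕ n → ℕ} (h : Nat.Primrec' f) :
    Compilable f := by
  induction h with
  | zero =>
    intro ins o B _ _ _ _
    exact ⟨.instr .skip, fun s _ hso => (Prog.runs_skip s).congr (by simp [← hso])⟩
  | succ =>
    intro ins o B _ hins ho hne
    exact ⟨.seq (.copy (ins 0) o B) (.instr (.inc o)), fun s hs hso =>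
      ((Prog.runs_copy (hne 0) (hins 0).ne ho.ne (hs B le_rfl)).seq (Prog.runs_inc _ _)).congr
        (by simp [hso, List.Vector.ofFn])⟩
  | get i =>
    intro ins o B _ hins ho hne
    exact ⟨.copy (ins i) o B, fun s hs hso =>
      (Prog.runs_copy (hne i) (hins i).ne ho.ne (hs B le_rfl)).congr (by simp [hso])⟩
  | comp g _ _ hf hg => exact hf.comp hg
  | prec _ _ hf hg => exact hf.prec hg

/-! ### A counter program with undecidable halting problem -/

theorem Prog.rel_star_inc_iff {i : ℕ} {s s' : ℕ → ℕ} (hi : s i = 0) :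
    (star (instr (.inc i))).Rel s s' ↔ ∃ k, s' = update s i k := by
  constructor
  · intro h
    induction h with
    | refl => exact ⟨0, by simp [← hi]⟩
    | tail _ h ih =>
      obtain ⟨k, rfl⟩ := ih
      exact ⟨k + 1, by simpa [Rel, Instr.Rel] using h⟩
  · rintro ⟨k, rfl⟩
    induction k with
    | zero =>
      rw [← hi, update_eq_self]
      exact .refl
    | succ k ih => exact ReflTransGen.tail ih (show _ = _ by simp)

theorem exists_prog_rel_iff_exists_eq_zero {f : ℕ → ℕ → ℕ} (hf : Primrec₂ f) :
    ∃ P : Prog, ∀ n, P.Rel (update 0 0 n) 0 ↔ ∃ k, f k n = 0 := by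
  obtain ⟨Q, hQ⟩ := compilable_of_primrec (Nat.Primrec'.prim_iff₂.2 hf) ![1, 0] 2 3
    (by decide) (by decide) (by decide) (by decide)
  refine ⟨.seq (.star (.instr (.inc 1))) (.seq Q (.seq (.instr (.tst 2))
    (.seq (.clear 1) (.clear 0)))), fun n => ?_⟩
  let input : ℕ → ℕ → ℕ := fun k => update (update 0 0 n) 1 k
  have hQk : ∀ k, Q.Runs (input k) (update (input k) 2 (f k n)) := fun k =>
    (hQ _ (fun j hj => by simp [input, show j ≠ 0 ∧ j ≠ 1 by omega])
      (by simp [input])).congr (by simp [input, List.Vector.ofFn])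
  have hclear : ∀ k a, Prog.Runs (.seq (.clear 1) (.clear 0)) (update (input k) 2 a)
      (update (0 : ℕ → ℕ) 2 a) := fun k a =>
    ((Prog.runs_clear _ _).seq (Prog.runs_clear _ _)).congr <| by
      funext j
      simp only [input, update_apply, Pi.zero_apply]
      grind
  constructor
  · rintro ⟨x, hx, y, hy, z, ⟨hz, rfl⟩, -⟩
    obtain ⟨k, rfl⟩ := (Prog.rel_star_inc_iff (by simp)).1 hx
    rw [(hQk k _).1 hy] at hz
    exact ⟨k, by simpa using hz⟩
  · rintro ⟨k, hk⟩
    refine ⟨_, (Prog.rel_star_inc_iff (by simp)).2 ⟨k, rfl⟩, _, (hQk k _).2 rfl, _,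
      ⟨by simpa using hk, rfl⟩, (hclear k _ _).2 ?_⟩
    rw [hk]
    exact (update_eq_self 2 (0 : ℕ → ℕ)).symm

theorem exists_primrec₂_not_computablePred :
    ∃ f : ℕ → ℕ → ℕ, Primrec₂ f ∧ ¬ ComputablePred fun n => ∃ k, f k n = 0 := by
  let f : ℕ → ℕ → ℕ := fun k n =>
    if (Nat.Partrec.Code.evaln k (Denumerable.ofNat Nat.Partrec.Code n) 0).isSome then 0 else 1
  refine ⟨f, ?_, fun h => ComputablePred.halting_problem 0 <|
    ComputablePred.computable_of_manyOneReducible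
      ⟨Encodable.encode, Computable.encode, fun c => ?_⟩ h⟩
  · have hsome : Primrec fun p : ℕ × ℕ =>
        (Nat.Partrec.Code.evaln p.1 (Denumerable.ofNat Nat.Partrec.Code p.2) 0).isSome :=
      Primrec.option_isSome.comp (Nat.Partrec.Code.primrec_evaln.comp
        ((Primrec.fst.pair ((Primrec.ofNat _).comp Primrec.snd)).pair (Primrec.const 0)))
    exact Primrec.ite (Primrec.eq.comp hsome (Primrec.const true)) (Primrec.const 0)
      (Primrec.const 1)
  · simp only [Part.dom_iff_mem, Nat.Partrec.Code.evaln_complete, f, Denumerable.ofNat_encode]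
    rw [exists_comm]
    exact exists_congr fun k => by cases Nat.Partrec.Code.evaln k c 0 <;> simp

theorem exists_prog_not_computablePred :
    ∃ P : Prog, ¬ ComputablePred fun n : ℕ => P.Rel (update 0 0 n) 0 := by
  obtain ⟨f, hf, hundec⟩ := exists_primrec₂_not_computablePred
  obtain ⟨P, hP⟩ := exists_prog_rel_iff_exists_eq_zero hf
  exact ⟨P, by simpa only [hP] using hundec⟩

/-! ### Labelled transition systems -/

/-- A step of the automaton with labelled edges `E` whose labels act on `S` through `act`. -/
def Step {Q L S : Type*} (act : L → S → S → Prop) (E : List (Q × L × Q)) (x y : Q × S) : Prop :=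
  ∃ a, (x.1, a, y.1) ∈ E ∧ act a x.2 y.2

/-- The relation `R` is the behaviour of a finite automaton between two of its states. -/
def Recognizable {L S : Type*} (act : L → S → S → Prop) (R : S → S → Prop) : Prop :=
  ∃ (Q : Type) (_ : Finite Q) (E : List (Q × L × Q)) (i f : Q),
    ∀ s s', ReflTransGen (Step act E) (i, s) (f, s') ↔ R s s'

section Recognizable

variable {Q Q' L S : Type*} {act : L → S → S → Prop} {R R' : S → S → Prop}

theorem Step.map {E : List (Q × L × Q)} {E' : List (Q' × L × Q')} {g : Q → Q'}
    (hg : ∀ p a q, (p, a, q) ∈ E → (g p, a, g q) ∈ E') {x y : Q × S}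
    (h : ReflTransGen (Step act E) x y) :
    ReflTransGen (Step act E') (g x.1, x.2) (g y.1, y.2) :=
  h.lift (Prod.map g id) fun _ _ ⟨a, ha, hact⟩ => ⟨a, hg _ _ _ ha, hact⟩

theorem recognizable_label (act : L → S → S → Prop) (a : L) : Recognizable act (act a) := by
  refine ⟨Bool, inferInstance, [(false, a, true)], false, true, fun s s' => ⟨fun h => ?_,
    fun h => .single ⟨a, List.mem_singleton_self _, h⟩⟩⟩
  obtain heq | ⟨⟨_, _⟩, ⟨_, hb, hs⟩, h⟩ := h.cases_head
  · simp at heq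
  simp only [List.mem_singleton, Prod.mk.injEq, true_and] at hb
  obtain ⟨rfl, rfl⟩ := hb
  obtain heq | ⟨_, ⟨_, hb, -⟩, -⟩ := h.cases_head
  · simp only [Prod.mk.injEq, true_and] at heq
    exact heq ▸ hs
  · simp at hb

variable {ε : L} (hε : ∀ s s', act ε s s' ↔ s' = s)
include hε

theorem Recognizable.comp (hR : Recognizable act R) (hR' : Recognizable act R') :
    Recognizable act (Comp R R') := by
  obtain ⟨Q, _, E, i, f, hE⟩ := hR
  obtain ⟨Q', _, E', i', f', hE'⟩ := hR'
  let F : List ((Q ⊕ Q') × L × (Q ⊕ Q')) :=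
    (.inl f, ε, .inr i') :: (E.map (fun e => (.inl e.1, e.2.1, .inl e.2.2)) ++
      E'.map fun e => (.inr e.1, e.2.1, .inr e.2.2))
  refine ⟨Q ⊕ Q', inferInstance, F, .inl i, .inr f', fun s s' => ⟨fun h => ?_, ?_⟩⟩
  · let Inv : (Q ⊕ Q') × S → Prop := fun x => x.1.elim
      (fun q => ∃ t, ReflTransGen (Step act E) (q, x.2) (f, t) ∧
        ReflTransGen (Step act E') (i', t) (f', s'))
      (fun q => ReflTransGen (Step act E') (q, x.2) (f', s'))
    have hInv : Inv (.inl i, s) := by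
      refine h.head_induction_on (motive := fun x _ => Inv x) .refl ?_
      rintro ⟨p, t⟩ ⟨q, t'⟩ ⟨a, ha, hact⟩ - ih
      simp only [F, List.mem_cons, List.mem_append, List.mem_map, Prod.mk.injEq] at ha
      obtain ⟨rfl, rfl, rfl⟩ | ⟨⟨p, b, q⟩, hb, rfl, rfl, rfl⟩ | ⟨⟨p, b, q⟩, hb, rfl, rfl, rfl⟩ := ha
      · obtain rfl := (hε _ _).1 hact
        exact ⟨_, .refl, ih⟩
      · obtain ⟨u, hu, hu'⟩ := ih
        exact ⟨u, hu.head ⟨_, hb, hact⟩, hu'⟩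
      · exact ReflTransGen.head ⟨_, hb, hact⟩ ih
    obtain ⟨t, ht, ht'⟩ := hInv
    exact ⟨t, (hE _ _).1 ht, (hE' _ _).1 ht'⟩
  · rintro ⟨t, ht, ht'⟩
    have h₁ := Step.map (E' := F) (g := Sum.inl)
      (fun p a q h => by simp [F, h]) ((hE _ _).2 ht)
    have h₂ := Step.map (E' := F) (g := Sum.inr)
      (fun p a q h => by simp [F, h]) ((hE' _ _).2 ht')
    exact (h₁.tail (c := (.inr i', t)) ⟨ε, by simp [F], (hε _ _).2 rfl⟩).trans h₂

theorem Recognizable.reflTransGen (hR : Recognizable act R) :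
    Recognizable act (ReflTransGen R) := by
  obtain ⟨Q, _, E, i, f, hE⟩ := hR
  let F : List (Option Q × L × Option Q) :=
    (none, ε, some i) :: (some f, ε, none) :: E.map fun e => (some e.1, e.2.1, some e.2.2)
  refine ⟨Option Q, inferInstance, F, none, none, fun s s' => ⟨fun h => ?_, fun h => ?_⟩⟩
  · let Inv : Option Q × S → Prop := fun x => x.1.elim (ReflTransGen R x.2 s') fun q =>
      ∃ t, ReflTransGen (Step act E) (q, x.2) (f, t) ∧ ReflTransGen R t s'
    change Inv (none, s)
    refine h.head_induction_on (motive := fun x _ => Inv x) .refl ?_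
    rintro ⟨p, t⟩ ⟨q, t'⟩ ⟨a, ha, hact⟩ - ih
    simp only [F, List.mem_cons, List.mem_map, Prod.mk.injEq] at ha
    obtain ⟨rfl, rfl, rfl⟩ | ⟨rfl, rfl, rfl⟩ | ⟨⟨p, b, q⟩, hb, rfl, rfl, rfl⟩ := ha
    · obtain rfl := (hε _ _).1 hact
      obtain ⟨u, hu, hu'⟩ := ih
      exact ReflTransGen.head ((hE _ _).1 hu) hu'
    · obtain rfl := (hε _ _).1 hact
      exact ⟨_, .refl, ih⟩
    · obtain ⟨u, hu, hu'⟩ := ih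
      exact ⟨u, hu.head ⟨_, hb, hact⟩, hu'⟩
  · induction h with
    | refl => exact .refl
    | tail _ h ih =>
      have h₁ := Step.map (E' := F) (g := some) (fun p a q h => by simp [F, h]) ((hE _ _).2 h)
      exact ih.trans ((h₁.head ⟨ε, by simp [F], (hε _ _).2 rfl⟩).tail
        ⟨ε, by simp [F], (hε _ _).2 rfl⟩)

end Recognizable

theorem Prog.recognizable (P : Prog) : Recognizable Instr.Rel P.Rel := by
  have hε : ∀ s s', Instr.Rel .skip s s' ↔ s' = s := fun _ _ => Iff.rfl
  induction P with
  | instr I => exact recognizable_label _ I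
  | seq P Q hP hQ => exact hP.comp hε hQ
  | star P hP => exact hP.reflTransGen hε

/-! ### Affine rewriting of natural numbers -/

/-- The rule rewriting `p * k + r` to `q * k + s` for every `k : ℕ`. -/
structure AffineRule where
  (p r q s : ℕ)

/-- Rewriting a number by an affine rule. -/
def AffineRule.Rel (α : AffineRule) (n m : ℕ) : Prop :=
  ∃ k, n = α.p * k + α.r ∧ m = α.q * k + α.s

/-- Rewriting a number by one of the rules in `J`. -/
def RuleStep (J : List AffineRule) (n m : ℕ) : Prop := ∃ α ∈ J, α.Rel n m

/-- The prime whose exponent encodes register `i`. -/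
noncomputable def regPrime (i : ℕ) : ℕ+ := ⟨Nat.nth Nat.Prime i, (Nat.prime_nth_prime i).pos⟩

/-- The register contents encoded by a positive integer: the exponents of the primes. -/
noncomputable def reg (n : ℕ+) (i : ℕ) : ℕ := (n : ℕ).factorization (regPrime i)

theorem prime_regPrime (i : ℕ) : (regPrime i : ℕ).Prime := Nat.prime_nth_prime i

theorem regPrime_injective : Injective regPrime := fun _ _ h =>
  Nat.nth_injective Nat.infinite_setOfPred_prime (congrArg PNat.val h)

theorem reg_regPrime_mul (i : ℕ) (n : ℕ+) :
    reg (regPrime i * n) = update (reg n) i (reg n i + 1) := by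
  funext j
  simp only [reg, PNat.mul_coe, Nat.factorization_mul (regPrime i).ne_zero n.ne_zero,
    (prime_regPrime i).factorization, Finsupp.add_apply, Finsupp.single_apply, PNat.coe_inj,
    regPrime_injective.eq_iff, update_apply]
  grind

theorem reg_injective : Injective reg := by
  intro n m h
  refine PNat.eq (Nat.eq_of_factorization_eq n.ne_zero m.ne_zero fun p => ?_)
  by_cases hp : p.Prime
  · obtain ⟨i, rfl⟩ : p ∈ Set.range (Nat.nth Nat.Prime) := by
      simpa [Nat.range_nth_of_infinite Nat.infinite_setOfPred_prime] using hp
    exact congrFun h i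
  · simp [Nat.factorization_eq_zero_of_not_prime _ hp]

theorem reg_eq_zero_iff {n : ℕ+} {i : ℕ} : reg n i = 0 ↔ ¬ (regPrime i : ℕ) ∣ n := by
  simp [reg, Nat.factorization_eq_zero_iff, prime_regPrime]

theorem reg_one : reg 1 = 0 := by
  funext i
  simp [reg]

theorem reg_two_pow (n : ℕ) : reg (2 ^ n) = update (0 : ℕ → ℕ) 0 n := by
  have h2 : regPrime 0 = 2 := PNat.eq Nat.nth_prime_zero_eq_two
  induction n with
  | zero => simpa using reg_one
  | succ n ih => rw [pow_succ', ← h2, reg_regPrime_mul, h2, ih]; simp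

/-- The affine rules by which an instruction acts on the encodings of the register contents. -/
noncomputable def Instr.rules : Instr → List AffineRule
  | .skip => [⟨1, 0, 1, 0⟩]
  | .inc i => [⟨1, 0, regPrime i, 0⟩]
  | .dec i => [⟨regPrime i, 0, 1, 0⟩]
  | .tst i => (List.range ((regPrime i : ℕ) - 1)).map fun r =>
      ⟨regPrime i, r + 1, regPrime i, r + 1⟩

theorem Instr.ruleStep_tst_iff {i n m : ℕ} :
    RuleStep (Instr.rules (.tst i)) n m ↔ ¬ (regPrime i : ℕ) ∣ n ∧ m = n := by
  have hp := (prime_regPrime i).two_le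
  simp only [RuleStep, AffineRule.Rel, rules, List.mem_map, List.mem_range,
    exists_exists_and_eq_and]
  constructor
  · rintro ⟨r, hr, k, rfl, rfl⟩
    refine ⟨fun h => ?_, rfl⟩
    have := Nat.le_of_dvd (by omega) ((Nat.dvd_add_right (dvd_mul_right _ k)).1 h)
    omega
  · rintro ⟨h, rfl⟩
    have : m % (regPrime i : ℕ) ≠ 0 := fun hmod => h (Nat.dvd_of_mod_eq_zero hmod)
    have hlt := Nat.mod_lt m (prime_regPrime i).pos
    have hdm := Nat.div_add_mod m (regPrime i : ℕ)
    exact ⟨m % (regPrime i : ℕ) - 1, by omega, m / (regPrime i : ℕ), by omega, by omega⟩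

theorem Instr.rel_reg_iff (I : Instr) (n : ℕ+) (s' : ℕ → ℕ) :
    I.Rel (reg n) s' ↔ ∃ m : ℕ+, s' = reg m ∧ RuleStep I.rules n m := by
  cases I with
  | skip =>
    have (m : ℕ+) : RuleStep (rules .skip) n m ↔ n = m := by
      simp [RuleStep, AffineRule.Rel, rules, eq_comm]
    simp [Rel, this]
  | inc i =>
    have (m : ℕ+) : RuleStep (rules (.inc i)) n m ↔ m = regPrime i * n := by
      simp [RuleStep, AffineRule.Rel, rules, ← PNat.coe_inj, PNat.mul_coe]
    simp [Rel, this, reg_regPrime_mul]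
  | dec i =>
    have (m : ℕ+) : RuleStep (rules (.dec i)) n m ↔ n = regPrime i * m := by
      simp [RuleStep, AffineRule.Rel, rules, ← PNat.coe_inj, PNat.mul_coe]
    simp only [this, Rel]
    constructor
    · intro h
      have hdvd : (regPrime i : ℕ) ∣ n := by
        by_contra hdvd
        simpa [h] using reg_eq_zero_iff.2 hdvd
      obtain ⟨m, rfl⟩ := PNat.dvd_iff.2 hdvd
      refine ⟨m, ?_, rfl⟩
      rw [reg_regPrime_mul] at h
      funext j
      have := congrFun h j
      have := congrFun h i
      grind
    · rintro ⟨m, rfl, rfl⟩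
      exact reg_regPrime_mul i m
  | tst i =>
    simp only [Rel, reg_eq_zero_iff, ruleStep_tst_iff, PNat.coe_inj]
    constructor
    · rintro ⟨h, rfl⟩
      exact ⟨n, rfl, h, rfl⟩
    · rintro ⟨m, rfl, h, rfl⟩
      exact ⟨h, rfl⟩

theorem Instr.pos_of_ruleStep {I : Instr} {n m : ℕ} (h : RuleStep I.rules n m) (hn : 0 < n) :
    0 < m := by
  cases I with
  | tst i => exact (ruleStep_tst_iff.1 h).2 ▸ hn
  | _ =>
    simp only [RuleStep, AffineRule.Rel, rules, List.mem_singleton, exists_eq_left] at h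
    obtain ⟨k, rfl, rfl⟩ := h
    have := fun i => (prime_regPrime i).pos
    simp_all [Nat.pos_iff_ne_zero]

theorem reflTransGen_image_iff {α β : Type*} {r : α → α → Prop} {r' : β → β → Prop} {φ : α → β}
    (hφ : Injective φ) (h : ∀ x y, r' (φ x) y ↔ ∃ x', y = φ x' ∧ r x x') {x y : α} :
    ReflTransGen r' (φ x) (φ y) ↔ ReflTransGen r x y := by
  refine ⟨fun hxy => ?_, fun hxy => hxy.lift φ fun x x' hx => (h x _).2 ⟨x', rfl, hx⟩⟩
  obtain ⟨y', hy, hxy'⟩ : ∃ y', φ y = φ y' ∧ ReflTransGen r x y' := by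
    generalize φ y = z at hxy
    induction hxy with
    | refl => exact ⟨x, rfl, .refl⟩
    | tail _ hz ih =>
      obtain ⟨y, rfl, hy⟩ := ih
      obtain ⟨y', rfl, hy'⟩ := (h _ _).1 hz
      exact ⟨y', rfl, hy.tail hy'⟩
  exact hφ hy ▸ hxy'

theorem mul_add_eq_mul_add_iff {N i j n m : ℕ} (hi : i < N) (hj : j < N) :
    N * n + i = N * m + j ↔ n = m ∧ i = j := by
  refine ⟨fun h => ?_, by rintro ⟨rfl, rfl⟩; rfl⟩
  obtain rfl : i = j := by
    simpa [Nat.mul_add_mod, Nat.mod_eq_of_lt, hi, hj] using congrArg (· % N) h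
  exact ⟨Nat.eq_of_mul_eq_mul_left (by omega) (Nat.add_right_cancel h), rfl⟩

/-- The rule `α` for numbers `N * n + i` with residue `i` modulo `N`, replacing the residue
by `j`. -/
def AffineRule.withResidue (α : AffineRule) (N i j : ℕ) : AffineRule :=
  ⟨N * α.p, N * α.r + i, N * α.q, N * α.s + j⟩

theorem AffineRule.withResidue_rel_iff {α : AffineRule} {N i i' j n m : ℕ} (hi : i < N)
    (hi' : i' < N) :
    (α.withResidue N i j).Rel (N * n + i') m ↔ i = i' ∧ ∃ m', m = N * m' + j ∧ α.Rel n m' := by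
  have hsplit (a b k i : ℕ) : N * a * k + (N * b + i) = N * (a * k + b) + i := by ring
  constructor
  · rintro ⟨k, hk, rfl⟩
    simp only [withResidue, hsplit] at hk
    obtain ⟨hn, rfl⟩ := (mul_add_eq_mul_add_iff hi' hi).1 hk
    exact ⟨rfl, α.q * k + α.s, hsplit _ _ _ _, k, hn, rfl⟩
  · rintro ⟨rfl, m', rfl, k, rfl, rfl⟩
    exact ⟨k, by simp only [withResidue]; ring, by simp only [withResidue]; ring⟩

/-- The affine rules by which an automaton over the instructions acts on the numbers `N * n + e q`
encoding a state `q` and registers `reg n`. -/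
noncomputable def edgeRules {Q : Type*} (N : ℕ) (e : Q → ℕ) (E : List (Q × Instr × Q)) :
    List AffineRule :=
  E.flatMap fun x => x.2.1.rules.map fun α => α.withResidue N (e x.1) (e x.2.2)

theorem ruleStep_edgeRules_iff {Q : Type*} {N : ℕ} {e : Q → ℕ} (he : ∀ q, e q < N)
    (he_inj : Injective e) {E : List (Q × Instr × Q)} {q : Q} {n m : ℕ} :
    RuleStep (edgeRules N e E) (N * n + e q) m ↔
      ∃ I q' m', (q, I, q') ∈ E ∧ m = N * m' + e q' ∧ RuleStep I.rules n m' := by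
  simp only [RuleStep, edgeRules, List.mem_flatMap, List.mem_map]
  constructor
  · rintro ⟨_, ⟨⟨p, I, q'⟩, hE, α, hα, rfl⟩, h⟩
    obtain ⟨hpq, m', hm, h⟩ := (AffineRule.withResidue_rel_iff (he _) (he _)).1 h
    exact ⟨I, q', m', he_inj hpq ▸ hE, hm, α, hα, h⟩
  · rintro ⟨I, q', m', hE, hm, α, hα, h⟩
    exact ⟨_, ⟨_, hE, α, hα, rfl⟩,
      (AffineRule.withResidue_rel_iff (he _) (he _)).2 ⟨rfl, m', hm, h⟩⟩

theorem exists_rules_reflTransGen_iff {Q : Type*} [Finite Q] (E : List (Q × Instr × Q)) :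
    ∃ (J : List AffineRule) (N : ℕ) (e : Q → ℕ), ∀ (q q' : Q) (n n' : ℕ+),
      ReflTransGen (RuleStep J) (N * n + e q) (N * n' + e q') ↔
        ReflTransGen (Step Instr.Rel E) (q, reg n) (q', reg n') := by
  let N := Nat.card Q
  let e : Q → ℕ := fun q => Finite.equivFin Q q
  have he (q : Q) : e q < N := (Finite.equivFin Q q).2
  have he_inj : Injective e := Fin.val_injective.comp (Finite.equivFin Q).injective
  let act : Instr → ℕ+ → ℕ+ → Prop := fun I n m => RuleStep I.rules n m
  refine ⟨edgeRules N e E, N, e, fun q q' n n' => ?_⟩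
  let φ : Q × ℕ+ → ℕ := fun x => N * x.2 + e x.1
  have hφ : Injective φ := by
    rintro ⟨p, n⟩ ⟨q, m⟩ h
    obtain ⟨hnm, hpq⟩ := (mul_add_eq_mul_add_iff (he p) (he q)).1 h
    exact Prod.ext (he_inj hpq) (PNat.eq hnm)
  let ψ : Q × ℕ+ → Q × (ℕ → ℕ) := Prod.map id reg
  trans ReflTransGen (Step act E) (q, n) (q', n')
  · refine reflTransGen_image_iff (x := (q, n)) (y := (q', n')) hφ
      fun x y => (ruleStep_edgeRules_iff he he_inj).trans ⟨?_, ?_⟩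
    · rintro ⟨I, q', m', hE, rfl, h⟩
      exact ⟨(q', ⟨m', Instr.pos_of_ruleStep h x.2.pos⟩), rfl, I, hE, h⟩
    · rintro ⟨x', rfl, I, hE, h⟩
      exact ⟨I, x'.1, x'.2, hE, rfl, h⟩
  · refine (reflTransGen_image_iff (φ := ψ) (injective_id.prodMap reg_injective)
      fun x y => ⟨?_, ?_⟩).symm
    · rintro ⟨I, hE, h⟩
      obtain ⟨m, hm, h⟩ := (I.rel_reg_iff _ _).1 h
      exact ⟨(y.1, m), Prod.ext rfl hm, I, hE, h⟩
    · rintro ⟨x', rfl, I, hE, h⟩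
      exact ⟨I, hE, (I.rel_reg_iff _ _).2 ⟨_, rfl, h⟩⟩

theorem exists_rules_not_computablePred :
    ∃ (J : List AffineRule) (N s τ : ℕ),
      ¬ ComputablePred fun n => ReflTransGen (RuleStep J) (N * 2 ^ n + s) τ := by
  obtain ⟨P, hP⟩ := exists_prog_not_computablePred
  obtain ⟨Q, _, E, i, f, hE⟩ := P.recognizable
  obtain ⟨J, N, e, hJ⟩ := exists_rules_reflTransGen_iff E
  refine ⟨J, N, e i, N * 1 + e f, fun h => hP (h.of_eq fun n => ?_)⟩
  simpa [reg_two_pow, reg_one, hE] using hJ i f (2 ^ n) 1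

/-! ### Inverse monoids -/

/-- An inverse monoid, presented by Vagner's identities. -/
class InverseMonoid (M : Type*) extends Monoid M, InvolutiveInv M where
  mul_inv_rev (a b : M) : (a * b)⁻¹ = b⁻¹ * a⁻¹
  mul_inv_mul (a : M) : a * a⁻¹ * a = a
  commute_mul_inv (a b : M) : Commute (a * a⁻¹) (b * b⁻¹)

instance (priority := 100) {G : Type*} [Group G] : InverseMonoid G where
  mul_inv_rev := _root_.mul_inv_rev
  mul_inv_mul := by simp
  commute_mul_inv := by simp

/-- In a monoid, an element has at most one inverse provided the idempotents it forms with its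
inverses commute. -/
theorem eq_of_mul_mul_eq {M : Type*} [Monoid M] {a b c : M} (hab : a * b * a = a)
    (hba : b * a * b = b) (hac : a * c * a = a) (hca : c * a * c = c)
    (hl : Commute (b * a) (c * a)) (hr : Commute (a * b) (a * c)) : b = c := by
  have hb : b = c * a * b := calc
    b = b * (a * c * a) * b := by rw [hac, hba]
    _ = b * a * (c * a) * b := by simp only [mul_assoc]
    _ = c * a * (b * a) * b := by rw [hl.eq]
    _ = c * a * b := by rw [mul_assoc (c * a), hba]
  have hc : c = c * a * b := calc
    c = c * (a * b * a) * c := by rw [hab, hca]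
    _ = c * (a * b * (a * c)) := by simp only [mul_assoc]
    _ = c * a * c * a * b := by rw [hr.eq]; simp only [mul_assoc]
    _ = c * a * b := by rw [hca]
  exact hb.trans hc.symm

namespace InverseMonoid

variable {M : Type*} [InverseMonoid M] {a b e x y : M}

theorem inv_mul_inv (a : M) : a⁻¹ * a * a⁻¹ = a⁻¹ := by
  simpa using mul_inv_mul a⁻¹

theorem isIdempotentElem_mul_inv (a : M) : IsIdempotentElem (a * a⁻¹) := by
  rw [IsIdempotentElem, ← mul_assoc, mul_inv_mul]

theorem isIdempotentElem_inv_mul (a : M) : IsIdempotentElem (a⁻¹ * a) := by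
  simpa using isIdempotentElem_mul_inv a⁻¹

theorem inv_eq_of_mul_eq_one (hab : a * b = 1) (hba : b * a = 1) : a⁻¹ = b := by
  have h : a * a⁻¹ = 1 := by rw [← mul_one (a * a⁻¹), ← hab, ← mul_assoc, mul_inv_mul]
  rw [← one_mul a⁻¹, ← hba, mul_assoc, h, mul_one]

theorem inv_eq_self_of_isIdempotentElem (he : IsIdempotentElem e) : e⁻¹ = e := by
  have he' : e⁻¹ * e⁻¹ = e⁻¹ := by rw [← mul_inv_rev, he.eq]
  have hcomm : e⁻¹ * e * (e * e⁻¹) = e * e⁻¹ * (e⁻¹ * e) := by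
    simpa using (commute_mul_inv e⁻¹ e).eq
  calc e⁻¹ = e⁻¹ * (e * e) * e⁻¹ := by rw [he.eq, inv_mul_inv]
    _ = e * e⁻¹ * (e⁻¹ * e) := by rw [← hcomm]; simp only [mul_assoc]
    _ = e * (e⁻¹ * e⁻¹) * e := by simp only [mul_assoc]
    _ = e := by rw [he', mul_inv_mul]

theorem commute_of_isIdempotentElem (ha : IsIdempotentElem a) (hb : IsIdempotentElem b) :
    Commute a b := by
  simpa only [inv_eq_self_of_isIdempotentElem, ha, hb, ha.eq, hb.eq] using commute_mul_inv a b

theorem isIdempotentElem_mul (ha : IsIdempotentElem a) (hb : IsIdempotentElem b) :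
    IsIdempotentElem (a * b) := by
  rw [IsIdempotentElem, (commute_of_isIdempotentElem hb ha).mul_mul_mul_comm, ha.eq, hb.eq]

theorem mul_idempotent_mul (he : IsIdempotentElem e) (x y : M) :
    x * (e * y) = x * e * x⁻¹ * (x * y) := by
  calc x * (e * y) = x * (x⁻¹ * x * e) * y := by
        rw [← mul_assoc x (x⁻¹ * x), ← mul_assoc x x⁻¹, mul_inv_mul, mul_assoc]
    _ = x * e * x⁻¹ * (x * y) := by
      rw [(commute_of_isIdempotentElem (isIdempotentElem_inv_mul x) he).eq]
      simp only [mul_assoc]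

theorem isIdempotentElem_conj (he : IsIdempotentElem e) (x : M) :
    IsIdempotentElem (x * e * x⁻¹) := by
  calc x * e * x⁻¹ * (x * e * x⁻¹) = x * (e * (e * x⁻¹)) := by
        rw [mul_idempotent_mul he, mul_assoc x e x⁻¹]
    _ = x * e * x⁻¹ := by rw [← mul_assoc e, he.eq, mul_assoc]

variable (M) in
/-- The right units: the elements `x` having a right inverse, which is then `x⁻¹`. -/
def rightUnits : Submonoid M where
  carrier := {x | x * x⁻¹ = 1}
  one_mem' := by
    change (1 : M) * 1⁻¹ = 1
    rw [inv_eq_of_mul_eq_one (one_mul 1) (one_mul 1), one_mul]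
  mul_mem' {x y} (hx : x * x⁻¹ = 1) (hy : y * y⁻¹ = 1) := by
    change x * y * (x * y)⁻¹ = 1
    rw [mul_inv_rev, mul_assoc, ← mul_assoc y, hy, one_mul, hx]

theorem mem_rightUnits : x ∈ rightUnits M ↔ x * x⁻¹ = 1 := Iff.rfl

theorem mem_rightUnits_of_mul_eq_one (h : x * y = 1) : x ∈ rightUnits M := by
  rw [mem_rightUnits, ← mul_one (x * x⁻¹), ← h, ← mul_assoc, mul_inv_mul, h]

theorem mem_rightUnits_of_mul (h : x * y ∈ rightUnits M) : x ∈ rightUnits M :=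
  mem_rightUnits_of_mul_eq_one ((mul_assoc _ _ _).symm.trans h)

theorem eq_one_of_isIdempotentElem (he : IsIdempotentElem e) (h : e ∈ rightUnits M) : e = 1 := by
  rwa [mem_rightUnits, inv_eq_self_of_isIdempotentElem he, he.eq] at h

theorem mul_mem_rightUnits_of_mul_idempotent_mul (he : IsIdempotentElem e)
    (h : x * e * y ∈ rightUnits M) : x * y ∈ rightUnits M := by
  have heq : x * e * y = x * e * x⁻¹ * (x * y) := by
    rw [mul_assoc x e y, mul_idempotent_mul he]
  rw [heq] at h
  rwa [eq_one_of_isIdempotentElem (isIdempotentElem_conj he x) (mem_rightUnits_of_mul h),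
    one_mul] at h

theorem prod_mul_eq_one_iff {l : List M} (hl : ∀ e ∈ l, IsIdempotentElem e) :
    l.prod * x = 1 ↔ (∀ e ∈ l, e = 1) ∧ x = 1 := by
  induction l with
  | nil => simp
  | cons e l ih =>
    simp only [List.forall_mem_cons] at hl ⊢
    rw [List.prod_cons, mul_assoc, and_assoc, ← ih hl.2]
    refine ⟨fun h => ?_, fun ⟨he, h⟩ => by rw [he, one_mul, h]⟩
    have he := eq_one_of_isIdempotentElem hl.1 (mem_rightUnits_of_mul_eq_one h)
    exact ⟨he, by rwa [he, one_mul] at h⟩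

theorem map_inv_of_group {G : Type*} [Group G] (ρ : G →* M) (g : G) : ρ g⁻¹ = (ρ g)⁻¹ :=
  (inv_eq_of_mul_eq_one (by simp [← map_mul]) (by simp [← map_mul])).symm

end InverseMonoid

/-! ### Partial bijections -/

section PEquiv

variable {Y : Type*}

/-- The symmetric inverse monoid on `Y`; products compose from left to right. -/
instance : InverseMonoid (Y ≃. Y) where
  mul := PEquiv.trans
  mul_assoc := PEquiv.trans_assoc
  one := PEquiv.refl Y
  one_mul := PEquiv.refl_trans
  mul_one := PEquiv.trans_refl
  inv := PEquiv.symm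
  inv_inv := PEquiv.symm_symm
  mul_inv_rev := PEquiv.symm_trans_rev
  mul_inv_mul f := by
    change (f.trans f.symm).trans f = f
    rw [PEquiv.self_trans_symm]
    ext a b
    simp only [PEquiv.trans_eq_some, PEquiv.ofSet_eq_some_iff, Set.mem_ofPred_eq,
      Option.isSome_iff_exists]
    grind
  commute_mul_inv f g := by
    change (f.trans f.symm).trans (g.trans g.symm) = (g.trans g.symm).trans (f.trans f.symm)
    simp only [PEquiv.self_trans_symm]
    ext a b
    simp only [PEquiv.trans_eq_some, PEquiv.ofSet_eq_some_iff]
    grind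

theorem mem_rightUnits_pequiv_iff {f : Y ≃. Y} :
    f ∈ InverseMonoid.rightUnits (Y ≃. Y) ↔ ∀ y, (f y).isSome :=
  PEquiv.trans_symm_eq_iff_forall_isSome

/-- An injection as a partial bijection onto its range. -/
noncomputable def pequivOfInjective (ι : Y → Y) (hι : Function.Injective ι) : Y ≃. Y where
  toFun y := some (ι y)
  invFun := Function.partialInv ι
  inv a b := by
    simpa [eq_comm] using hι.isPartialInv a b

theorem conj_toPEquiv_mem_rightUnits_iff {ι : Y → Y} {hι : Function.Injective ι}
    {σ : Equiv.Perm Y} :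
    pequivOfInjective ι hι * σ.toPEquiv * (pequivOfInjective ι hι)⁻¹ ∈
      InverseMonoid.rightUnits (Y ≃. Y) ↔ ∀ y, σ (ι y) ∈ Set.range ι := by
  rw [mem_rightUnits_pequiv_iff]
  refine forall_congr' fun y => ?_
  change (((pequivOfInjective ι hι).trans σ.toPEquiv).trans (pequivOfInjective ι hι).symm y).isSome
    = true ↔ _
  simp only [Option.isSome_iff_exists, PEquiv.trans_eq_some, PEquiv.eq_some_iff]
  simp [pequivOfInjective, Equiv.toPEquiv]

end PEquiv

/-! ### Words -/

section evalWord

variable {B B' M N : Type*}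

/-- The value of a word, given the values of the generators; formal inverses become inverses. -/
def evalWord [Monoid M] [Inv M] (f : B → M) : FreeMonoid (B × Bool) →* M :=
  FreeMonoid.lift fun x => if x.2 then f x.1 else (f x.1)⁻¹

instance : InvolutiveInv (FreeMonoid (B × Bool)) where
  inv := wInv
  inv_inv u := by
    change FreeMonoid.ofList _ = _
    simp [wInv, Function.comp_def]

theorem wInv_mul (u v : FreeMonoid (B × Bool)) : wInv (u * v) = wInv v * wInv u := by
  simp [wInv]

@[simp]
theorem evalWord_of [Monoid M] [Inv M] (f : B → M) (b : B) :
    evalWord f (FreeMonoid.of (b, true)) = f b := by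
  simp [evalWord]

theorem evalWord_of_false [Monoid M] [Inv M] (f : B → M) (b : B) :
    evalWord f (FreeMonoid.of (b, false)) = (f b)⁻¹ := by
  simp [evalWord]

theorem map_evalWord [Monoid M] [Inv M] [Monoid N] [Inv N] {f : B → M} {φ : M →* N}
    (hφ : ∀ b, φ (f b)⁻¹ = (φ (f b))⁻¹) (u : FreeMonoid (B × Bool)) :
    φ (evalWord f u) = evalWord (φ ∘ f) u := by
  refine DFunLike.congr_fun (f := φ.comp (evalWord f)) (FreeMonoid.hom_eq fun x => ?_) u
  obtain ⟨b, _ | _⟩ := x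
  · simp [evalWord_of_false, hφ]
  · simp

theorem evalWord_wInv [InverseMonoid M] (f : B → M) (u : FreeMonoid (B × Bool)) :
    evalWord f (wInv u) = (evalWord f u)⁻¹ := by
  induction u using FreeMonoid.inductionOn with
  | one => rw [InverseMonoid.inv_eq_of_mul_eq_one (b := 1)] <;> simp [wInv]
  | of x =>
    obtain ⟨b, _ | _⟩ := x
    · simp [wInv, evalWord_of_false]
    · simp [wInv, evalWord_of_false]
  | mul u v hu hv => simp [wInv_mul, hu, hv, InverseMonoid.mul_inv_rev]

/-- Renaming the generators in a word. -/
def renameWord (h : B → B') : FreeMonoid (B × Bool) →* FreeMonoid (B' × Bool) :=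
  FreeMonoid.map (Prod.map h id)

theorem evalWord_renameWord [Monoid M] [Inv M] (f : B' → M) (h : B → B')
    (u : FreeMonoid (B × Bool)) :
    evalWord f (renameWord h u) = evalWord (fun b => f (h b)) u := by
  refine DFunLike.congr_fun (f := (evalWord f).comp (renameWord h))
    (FreeMonoid.hom_eq fun x => ?_) u
  simp [evalWord, renameWord]

theorem evalWord_generators (u : FreeMonoid (B × Bool)) :
    evalWord (fun b => FreeMonoid.of (b, true)) u = u := by
  refine DFunLike.congr_fun (g := MonoidHom.id _) (FreeMonoid.hom_eq fun x => ?_) u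
  obtain ⟨b, _ | _⟩ := x
  · exact evalWord_of_false _ _
  · simp

theorem evalWord_eq_lift {G : Type*} [Group G] (f : B → G) (u : FreeMonoid (B × Bool)) :
    evalWord f u = FreeGroup.lift f (FreeGroup.mk u.toList) := by
  simp [evalWord, FreeMonoid.lift_apply, FreeGroup.lift_mk, Bool.cond_eq_ite]

end evalWord

/-! ### Inverse monoids given by generators and relations -/

section Con

variable {B : Type*} {c : Con (FreeMonoid (B × Bool))}

theorem con_wInv (hc : ∀ x y, vagnerRel B x y → c x y) {x y : FreeMonoid (B × Bool)} (h : c x y) :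
    c (wInv x) (wInv y) := by
  have hmul (u : FreeMonoid (B × Bool)) : c.mk' u * c.mk' u⁻¹ * c.mk' u = c.mk' u :=
    c.eq.2 (hc _ _ (.inl ⟨u, rfl, rfl⟩))
  have hcomm (u v : FreeMonoid (B × Bool)) :
      Commute (c.mk' u * c.mk' u⁻¹) (c.mk' v * c.mk' v⁻¹) :=
    c.eq.2 (hc _ _ (.inr ⟨v, u, rfl, rfl⟩))
  have hxy : c.mk' x = c.mk' y := c.eq.2 h
  have hmul' (u : FreeMonoid (B × Bool)) : c.mk' u⁻¹ * c.mk' u * c.mk' u⁻¹ = c.mk' u⁻¹ := by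
    simpa using hmul u⁻¹
  have hl : Commute (c.mk' x⁻¹ * c.mk' x) (c.mk' y⁻¹ * c.mk' y) := by simpa using hcomm x⁻¹ y⁻¹
  refine c.eq.1 (eq_of_mul_mul_eq (hmul x) (hmul' x) ?_ ?_ ?_ ?_ : c.mk' x⁻¹ = c.mk' y⁻¹)
  · exact hxy ▸ hmul y
  · exact hxy ▸ hmul' y
  · rwa [← hxy] at hl
  · have := hcomm x y
    rwa [← hxy] at this

/-- The quotient of the monoid of words by a congruence containing the Vagner congruence. -/
abbrev inverseMonoidQuotient (hc : ∀ x y, vagnerRel B x y → c x y) : InverseMonoid c.Quotient where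
  inv := Quotient.map' wInv fun _ _ => con_wInv hc
  inv_inv := by
    rintro ⟨u⟩
    exact congrArg c.mk' (inv_inv u)
  mul_inv_rev := by
    rintro ⟨u⟩ ⟨v⟩
    exact congrArg c.mk' (wInv_mul u v)
  mul_inv_mul := by
    rintro ⟨u⟩
    exact c.eq.2 (hc _ _ (.inl ⟨u, rfl, rfl⟩))
  commute_mul_inv := by
    rintro ⟨u⟩ ⟨v⟩
    exact c.eq.2 (hc _ _ (.inr ⟨v, u, rfl, rfl⟩))

end Con

section OneRelator

variable {n : ℕ} {w : FreeMonoid (Fin n × Bool)}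

instance : InverseMonoid (oneRelatorInvCon w).Quotient :=
  inverseMonoidQuotient fun _ _ h => ConGen.Rel.of _ _ (.inl h)

variable (w) in
/-- The generators of `Inv⟨Fin n | w = 1⟩`. -/
def oneRelatorGen (i : Fin n) : (oneRelatorInvCon w).Quotient :=
  (oneRelatorInvCon w).mk' (FreeMonoid.of (i, true))

theorem oneRelatorInvCon_iff {x y : FreeMonoid (Fin n × Bool)} :
    oneRelatorInvCon w x y ↔ evalWord (oneRelatorGen w) x = evalWord (oneRelatorGen w) y := by
  have key (u) : evalWord (oneRelatorGen w) u = (oneRelatorInvCon w).mk' u := by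
    conv_rhs => rw [← evalWord_generators u]
    exact (map_evalWord (φ := (oneRelatorInvCon w).mk') (fun _ => by rfl) u).symm
  rw [key, key]
  exact (oneRelatorInvCon w).eq.symm

theorem evalWord_oneRelatorGen_eq_one : evalWord (oneRelatorGen w) w = 1 := by
  rw [← map_one (evalWord (oneRelatorGen w)), ← oneRelatorInvCon_iff]
  exact ConGen.Rel.of _ _ (.inr ⟨rfl, rfl⟩)

theorem evalWord_eq_of_oneRelatorInvCon {M : Type*} [InverseMonoid M] {f : Fin n → M}
    (hf : evalWord f w = 1) {x y : FreeMonoid (Fin n × Bool)} (h : oneRelatorInvCon w x y) :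
    evalWord f x = evalWord f y := by
  refine (Con.conGen_le (c := Con.ker (evalWord f))).2 ?_ h
  rintro _ _ ((⟨u, rfl, rfl⟩ | ⟨u, v, rfl, rfl⟩) | ⟨rfl, rfl⟩)
  · simp [evalWord_wInv, InverseMonoid.mul_inv_mul]
  · simpa [evalWord_wInv] using (InverseMonoid.commute_mul_inv _ _).eq
  · simpa using hf

end OneRelator

/-! ### Normal forms with a free stable letter -/

section FreeStableLetter

open InverseMonoid HNNExtension HNNExtension.NormalWord

variable (G : Type*) [Group G]

/-- The free product of `G` and the infinite cyclic group on `t`, as an HNN extension with trivial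
associated subgroups so that Britton's lemma applies. -/
abbrev FreeStableExtension : Type _ := HNNExtension G ⊥ ⊥ (MulEquiv.refl (⊥ : Subgroup G))

variable {G} {M : Type*} [InverseMonoid M] (τ : M) (κ : G →* M)

/-- The element `τ` or `τ⁻¹` of an inverse monoid, according to the sign. -/
def signedLetter (s : ℤˣ) : M := if s = 1 then τ else τ⁻¹

theorem signedLetter_neg (s : ℤˣ) : signedLetter τ (-s) = (signedLetter τ s)⁻¹ := by
  obtain rfl | rfl := Int.units_eq_one_or s <;> simp [signedLetter, neg_eq_iff_eq_neg]

/-- The product spelt by a reduced word, evaluated in an inverse monoid containing an image of `G`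
and an element `τ` for the stable letter. -/
def reducedWordEval (w : ReducedWord G ⊥ ⊥) : M :=
  κ w.head * (w.toList.map fun x => signedLetter τ x.1 * κ x.2).prod

theorem exists_reducedWord_of_mul (g : G) (w : ReducedWord G ⊥ ⊥) :
    ∃ w' : ReducedWord G ⊥ ⊥, w'.prod (MulEquiv.refl _) = of g * w.prod (MulEquiv.refl _) ∧
      reducedWordEval τ κ w' = κ g * reducedWordEval τ κ w :=
  ⟨{ w with head := g * w.head }, by simp [ReducedWord.prod, mul_assoc],
    by simp [reducedWordEval, mul_assoc]⟩

/- Cancelling `t^s` against a leading `t^{-s}` is valid in the inverse monoid up to the idempotent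
`τ^s τ^{-s}`, which is kept as a factor on the left. -/
theorem exists_reducedWord_t_mul (s : ℤˣ) (w : ReducedWord G ⊥ ⊥) :
    ∃ (w' : ReducedWord G ⊥ ⊥) (e : M), IsIdempotentElem e ∧
      w'.prod (MulEquiv.refl _) = t ^ (s : ℤ) * w.prod (MulEquiv.refl _) ∧
      signedLetter τ s * reducedWordEval τ κ w = e * reducedWordEval τ κ w' := by
  by_cases hw : w.head = 1 ∧ ∃ g l, w.toList = (-s, g) :: l
  · obtain ⟨hhead, g, l, hl⟩ := hw
    have hchain := w.chain
    rw [hl] at hchain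
    refine ⟨⟨g, l, hchain.tail⟩, _, isIdempotentElem_mul_inv (signedLetter τ s), ?_, ?_⟩
    · simp [ReducedWord.prod, hhead, hl, mul_assoc]
    · simp [reducedWordEval, hhead, hl, signedLetter_neg, mul_assoc]
  · refine ⟨⟨1, (s, w.head) :: w.toList, ?_⟩, 1, .one, ?_, ?_⟩
    · refine List.isChain_cons.2 ⟨fun ⟨s', g⟩ hx hmem => ?_, w.chain⟩
      obtain ⟨l, hl⟩ := List.head?_eq_some_iff.1 hx
      have hhead : w.head = 1 := by simpa [toSubgroup] using hmem
      by_contra hs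
      exact hw ⟨hhead, g, l, Int.units_ne_iff_eq_neg.1 (Ne.symm hs) ▸ hl⟩
    · simp [ReducedWord.prod, mul_assoc]
    · simp [reducedWordEval, mul_assoc]

variable {τ κ} in
theorem exists_reducedWord_evalWord {n : ℕ} {f : Fin (n + 1) → M} {g : Fin n → G}
    (hf : ∀ i, f i.succ = κ (g i)) (u : FreeMonoid (Fin (n + 1) × Bool)) :
    ∃ (w : ReducedWord G ⊥ ⊥) (e : M), IsIdempotentElem e ∧
      w.prod (MulEquiv.refl _) = evalWord (Fin.cons t fun i => of (g i)) u ∧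
      evalWord f u = e * reducedWordEval (f 0) κ w := by
  have letter (x : Fin (n + 1) × Bool) (w : ReducedWord G ⊥ ⊥) :
      ∃ (w' : ReducedWord G ⊥ ⊥) (e : M), IsIdempotentElem e ∧ w'.prod (MulEquiv.refl _) =
        evalWord (Fin.cons t fun i => of (g i)) (.of x) * w.prod (MulEquiv.refl _) ∧
      evalWord f (.of x) * reducedWordEval (f 0) κ w = e * reducedWordEval (f 0) κ w' := by
    obtain ⟨i, b⟩ := x
    cases i using Fin.cases with
    | zero =>
      cases b
      · simpa [evalWord_of_false, signedLetter] using exists_reducedWord_t_mul (f 0) κ (-1) w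
      · simpa [signedLetter] using exists_reducedWord_t_mul (f 0) κ 1 w
    | succ i =>
      obtain ⟨w', hprod, heval⟩ :=
        exists_reducedWord_of_mul (f 0) κ (if b then g i else (g i)⁻¹) w
      refine ⟨w', 1, .one, ?_, ?_⟩ <;> cases b <;>
        simp_all [evalWord_of_false, map_inv_of_group]
  induction u using FreeMonoid.inductionOn' with
  | one => exact ⟨.empty G ⊥ ⊥, 1, .one, by simp [ReducedWord.prod], by simp [reducedWordEval]⟩
  | of_mul x u ih =>
    obtain ⟨w, e, he, hprod, heval⟩ := ih
    obtain ⟨w', e', he', hprod', heval'⟩ := letter x w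
    refine ⟨w', _, isIdempotentElem_mul (isIdempotentElem_conj he (evalWord f (.of x))) he',
      by rw [hprod', hprod, map_mul], ?_⟩
    rw [map_mul, heval, mul_idempotent_mul he, heval', ← mul_assoc]

theorem isIdempotentElem_evalWord {n : ℕ} {f : Fin (n + 1) → M} {g : Fin n → G}
    (hf : ∀ i, f i.succ = κ (g i)) {u : FreeMonoid (Fin (n + 1) × Bool)}
    (hu : evalWord (Fin.cons t fun i => of (g i) : Fin (n + 1) → FreeStableExtension G) u = 1) :
    IsIdempotentElem (evalWord f u) := by
  obtain ⟨w, e, he, hprod, heval⟩ := exists_reducedWord_evalWord hf u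
  rw [hu] at hprod
  have hl : w.toList = [] :=
    ReducedWord.toList_eq_nil_of_mem_of_range _ w (hprod ▸ one_mem _)
  have hhead : w.head = 1 := by
    apply of_injective (φ := MulEquiv.refl (⊥ : Subgroup G))
    simpa [ReducedWord.prod, hl] using hprod
  simpa [heval, reducedWordEval, hl, hhead] using he

end FreeStableLetter

/-! ### Gray's construction -/

section Relator

open InverseMonoid

variable {k : ℕ}

/-- The word `t v t⁻¹`, where the stable letter `t` is the generator `0` and the generators of `v`
are renumbered accordingly. -/
def stableConj (v : FreeMonoid (Fin k × Bool)) : FreeMonoid (Fin (k + 1) × Bool) :=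
  FreeMonoid.of (0, true) * renameWord Fin.succ v * wInv (FreeMonoid.of (0, true))

/-- Gray's relator: setting `∏ s s⁻¹ * r = 1` forces every prefix `s` to be a right unit. The
prefixes are the stable letter `t`, all letters of `r` and their inverses, and the words `t v t⁻¹`
for `v ∈ vs`. -/
noncomputable def grayRelator (r : FreeMonoid (Fin k × Bool))
    (vs : List (FreeMonoid (Fin k × Bool))) : FreeMonoid (Fin (k + 1) × Bool) :=
  ((FreeMonoid.of (0, true) ::
    ((Finset.univ : Finset (Fin k × Bool)).toList.map fun x => renameWord Fin.succ (.of x)) ++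
    vs.map stableConj).map fun s => s * wInv s).prod * renameWord Fin.succ r

section InverseMonoid

variable {M : Type*} [InverseMonoid M] (f : Fin (k + 1) → M)

theorem evalWord_stableConj (v : FreeMonoid (Fin k × Bool)) :
    evalWord f (stableConj v) = f 0 * evalWord (fun i => f i.succ) v * (f 0)⁻¹ := by
  simp [stableConj, evalWord_renameWord, evalWord_wInv]

theorem evalWord_grayRelator_eq_one_iff {r : FreeMonoid (Fin k × Bool)}
    {vs : List (FreeMonoid (Fin k × Bool))} :
    evalWord f (grayRelator r vs) = 1 ↔
      (f 0 ∈ rightUnits M ∧ (∀ i : Fin k, f i.succ ∈ rightUnits M ∧ (f i.succ)⁻¹ ∈ rightUnits M) ∧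
        ∀ v ∈ vs, evalWord f (stableConj v) ∈ rightUnits M) ∧
      evalWord (fun i => f i.succ) r = 1 := by
  rw [grayRelator, map_mul, map_list_prod, List.map_map, prod_mul_eq_one_iff, evalWord_renameWord]
  · simp only [List.forall_mem_map, List.forall_mem_append, List.forall_mem_cons]
    simp [evalWord_wInv, evalWord_renameWord, evalWord_of_false, mem_rightUnits, and_assoc,
      and_comm]
  · rw [List.forall_mem_map]
    intro s _
    simpa [evalWord_wInv] using isIdempotentElem_mul_inv (evalWord f s)

end InverseMonoid

/-- The group with the single relator `r`. -/
abbrev OneRelatorGroup (r : FreeMonoid (Fin k × Bool)) : Type :=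
  PresentedGroup {FreeGroup.mk r.toList}

theorem evalWord_of_eq_one (r : FreeMonoid (Fin k × Bool)) :
    evalWord (PresentedGroup.of : Fin k → OneRelatorGroup r) r = 1 := by
  have h : FreeGroup.lift PresentedGroup.of = PresentedGroup.mk {FreeGroup.mk r.toList} :=
    FreeGroup.ext_hom _ _ fun _ => FreeGroup.lift_apply_of
  rw [evalWord_eq_lift, h]
  exact PresentedGroup.one_of_mem rfl

theorem exists_oneRelatorGroup_hom {M : Type*} [InverseMonoid M] {f : Fin k → M}
    (hf : ∀ i, f i ∈ rightUnits M ∧ (f i)⁻¹ ∈ rightUnits M) {r : FreeMonoid (Fin k × Bool)}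
    (hr : evalWord f r = 1) : ∃ κ : OneRelatorGroup r →* M, ∀ i, κ (.of i) = f i := by
  let x (i : Fin k) : Mˣ := ⟨f i, (f i)⁻¹, (hf i).1, by simpa [mem_rightUnits] using (hf i).2⟩
  have hx : evalWord x r = 1 := by
    apply Units.ext
    rw [← Units.coeHom_apply, map_evalWord fun _ => map_inv_of_group _ _]
    exact hr
  refine ⟨(Units.coeHom M).comp (PresentedGroup.toGroup (f := x) ?_), fun i => ?_⟩
  · rintro _ rfl
    rwa [← evalWord_eq_lift]
  · simp [x]

variable {r : FreeMonoid (Fin k × Bool)} {vs : List (FreeMonoid (Fin k × Bool))}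

theorem exists_oneRelatorGroup_hom_grayRelator :
    ∃ κ : OneRelatorGroup r →* (oneRelatorInvCon (grayRelator r vs)).Quotient,
      ∀ i, oneRelatorGen (grayRelator r vs) i.succ = κ (.of i) := by
  have h :=
    (evalWord_grayRelator_eq_one_iff _).1 (evalWord_oneRelatorGen_eq_one (w := grayRelator r vs))
  obtain ⟨κ, hκ⟩ := exists_oneRelatorGroup_hom h.1.2.1 h.2
  exact ⟨κ, fun i => (hκ i).symm⟩

theorem oneRelatorInvCon_grayRelator_mul_self {u : FreeMonoid (Fin (k + 1) × Bool)}
    (hu : FreeGroup.mk u.toList ∈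
      Subgroup.normalClosure {FreeGroup.mk (grayRelator r vs).toList}) :
    oneRelatorInvCon (grayRelator r vs) (u * u) u := by
  obtain ⟨κ, hκ⟩ := exists_oneRelatorGroup_hom_grayRelator (r := r) (vs := vs)
  rw [oneRelatorInvCon_iff, map_mul]
  refine isIdempotentElem_evalWord κ hκ ?_
  rw [evalWord_eq_lift, ← MonoidHom.mem_ker]
  refine Subgroup.normalClosure_le_normal (Set.singleton_subset_iff.2 ?_) hu
  rw [SetLike.mem_coe, MonoidHom.mem_ker, ← evalWord_eq_lift, evalWord_grayRelator_eq_one_iff]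
  refine ⟨by simp [mem_rightUnits], ?_⟩
  simp only [Fin.cons_succ]
  exact (map_evalWord (fun _ => map_inv _ _) r).symm.trans (by rw [evalWord_of_eq_one, map_one])

/-- The submonoid of the one-relator group generated by finitely many words. -/
def wordSubmonoid (r : FreeMonoid (Fin k × Bool)) (vs : List (FreeMonoid (Fin k × Bool))) :
    Submonoid (OneRelatorGroup r) :=
  Submonoid.closure (evalWord PresentedGroup.of '' {v | v ∈ vs})

theorem oneRelatorInvCon_of_mem_wordSubmonoid {v : FreeMonoid (Fin k × Bool)}
    (hv : evalWord PresentedGroup.of v ∈ wordSubmonoid r vs) :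
    oneRelatorInvCon (grayRelator r vs) (stableConj v * wInv (stableConj v)) 1 := by
  obtain ⟨κ, hκ⟩ := exists_oneRelatorGroup_hom_grayRelator (r := r) (vs := vs)
  set τ := oneRelatorGen (grayRelator r vs) 0
  have hrel :=
    (evalWord_grayRelator_eq_one_iff _).1 (evalWord_oneRelatorGen_eq_one (w := grayRelator r vs))
  have heval (v : FreeMonoid (Fin k × Bool)) :
      evalWord (oneRelatorGen (grayRelator r vs)) (stableConj v) =
        τ * κ (evalWord PresentedGroup.of v) * τ⁻¹ := by
    rw [evalWord_stableConj, map_evalWord fun _ => map_inv_of_group _ _]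
    simp only [hκ]
    rfl
  have key {g : OneRelatorGroup r} (hg : g ∈ wordSubmonoid r vs) :
      τ * κ g * τ⁻¹ ∈ rightUnits (oneRelatorInvCon (grayRelator r vs)).Quotient := by
    induction hg using Submonoid.closure_induction with
    | mem g hg =>
      obtain ⟨v, hv, rfl⟩ := hg
      exact heval v ▸ hrel.1.2.2 v hv
    | one =>
      rw [map_one, mul_one, mem_rightUnits.1 hrel.1.1]
      exact one_mem _
    | mul g h _ _ hg hh =>
      have hgh : τ * κ g * (τ⁻¹ * τ) * (κ h * τ⁻¹) ∈ rightUnits _ := by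
        simpa only [mul_assoc] using mul_mem hg hh
      simpa only [map_mul, mul_assoc] using
        mul_mem_rightUnits_of_mul_idempotent_mul (isIdempotentElem_inv_mul τ) hgh
  rw [oneRelatorInvCon_iff, map_mul, evalWord_wInv, map_one, heval]
  exact key hv

/-- The right regular representation of `G` by partial bijections of `G × ℕ`, acting on the left
factor. -/
def rightTranslation (G : Type*) [Group G] : G →* (G × ℕ ≃. G × ℕ) where
  toFun g := ((Equiv.mulRight g).prodCongr (Equiv.refl ℕ)).toPEquiv
  map_one' := by
    rw [show (Equiv.mulRight (1 : G)).prodCongr (Equiv.refl ℕ) = Equiv.refl _ by ext <;> simp]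
    exact Equiv.toPEquiv_refl
  map_mul' g h := by
    refine (congrArg _ (Equiv.ext fun x => ?_)).trans (Equiv.toPEquiv_trans _ _)
    simp [Prod.map, mul_assoc]

open Classical in
/-- The injection of `G × ℕ` with range `{(g, n) | 0 < n ∨ g ∈ T}` preserving the left factor. -/
noncomputable def fibreShift {G : Type*} [Group G] (T : Submonoid G) (y : G × ℕ) : G × ℕ :=
  (y.1, if y.1 ∈ T then y.2 else y.2 + 1)

theorem fibreShift_injective {G : Type*} [Group G] (T : Submonoid G) :
    Function.Injective (fibreShift T) := by
  rintro ⟨g, m⟩ ⟨h, n⟩ heq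
  simp only [fibreShift, Prod.mk.injEq] at heq
  grind

theorem mem_range_fibreShift {G : Type*} [Group G] {T : Submonoid G} {y : G × ℕ} :
    y ∈ Set.range (fibreShift T) ↔ 0 < y.2 ∨ y.1 ∈ T := by
  obtain ⟨g, n⟩ := y
  refine ⟨?_, fun h => ?_⟩
  · rintro ⟨⟨_, m⟩, ⟨⟩⟩
    simp only
    grind
  · by_cases hg : g ∈ T
    · exact ⟨(g, n), by simp [fibreShift, hg]⟩
    · exact ⟨(g, n - 1), by simp [fibreShift, hg, Nat.sub_add_cancel (h.resolve_right hg)]⟩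

theorem conj_rightTranslation_mem_rightUnits_iff {G : Type*} [Group G] {T : Submonoid G} {g : G} :
    pequivOfInjective _ (fibreShift_injective T) * rightTranslation G g *
      (pequivOfInjective _ (fibreShift_injective T))⁻¹ ∈ rightUnits (G × ℕ ≃. G × ℕ) ↔ g ∈ T := by
  refine conj_toPEquiv_mem_rightUnits_iff.trans ?_
  simp only [mem_range_fibreShift]
  refine ⟨fun h => by simpa [fibreShift] using h (1, 0), fun hg ⟨x, n⟩ => ?_⟩
  by_cases hx : x ∈ T
  · exact .inr (mul_mem hx hg)
  · simp [fibreShift, hx]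

theorem mem_wordSubmonoid_of_oneRelatorInvCon {v : FreeMonoid (Fin k × Bool)}
    (h : oneRelatorInvCon (grayRelator r vs) (stableConj v * wInv (stableConj v)) 1) :
    evalWord PresentedGroup.of v ∈ wordSubmonoid r vs := by
  let T := wordSubmonoid r vs
  let ρ := rightTranslation (OneRelatorGroup r)
  let f : Fin (k + 1) → (OneRelatorGroup r × ℕ ≃. OneRelatorGroup r × ℕ) :=
    Fin.cons (pequivOfInjective _ (fibreShift_injective T)) fun i => ρ (.of i)
  have heval (u : FreeMonoid (Fin k × Bool)) :
      evalWord (fun i => f i.succ) u = ρ (evalWord PresentedGroup.of u) :=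
    (map_evalWord (fun _ => map_inv_of_group _ _) u).symm
  have hconj (u : FreeMonoid (Fin k × Bool)) :
      evalWord f (stableConj u) ∈ rightUnits _ ↔ evalWord PresentedGroup.of u ∈ T := by
    rw [evalWord_stableConj, heval]
    exact conj_rightTranslation_mem_rightUnits_iff
  have hrel : evalWord f (grayRelator r vs) = 1 := by
    refine (evalWord_grayRelator_eq_one_iff f).2 ⟨⟨?_, fun i => ⟨?_, ?_⟩, fun u hu => ?_⟩, ?_⟩
    · exact mem_rightUnits_pequiv_iff.2 fun _ => rfl
    · simp [f, mem_rightUnits, ← map_inv_of_group, ← map_mul]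
    · simp [f, mem_rightUnits, ← map_inv_of_group, ← map_mul]
    · exact (hconj u).2 (Submonoid.subset_closure ⟨u, hu, rfl⟩)
    · rw [heval, evalWord_of_eq_one, map_one]
  rw [← hconj, mem_rightUnits, ← evalWord_wInv, ← map_mul, ← map_one (evalWord f)]
  exact evalWord_eq_of_oneRelatorInvCon hrel h

/-- Gray's theorem: the word problem of the inverse monoid decides membership in the submonoid
generated by `vs`. -/
theorem oneRelatorInvCon_stableConj_iff {v : FreeMonoid (Fin k × Bool)} :
    oneRelatorInvCon (grayRelator r vs) (stableConj v * wInv (stableConj v)) 1 ↔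
      evalWord PresentedGroup.of v ∈ wordSubmonoid r vs :=
  ⟨mem_wordSubmonoid_of_oneRelatorInvCon, oneRelatorInvCon_of_mem_wordSubmonoid⟩

end Relator

/-! ### Automata over groups and submonoid membership -/

section GroupAutomaton

variable {Q L A H : Type*} [Group A] [Group H]

/-- The action of the labels of a group automaton: reading `u` strips `ev u` from the front. -/
def Strip (ev : L → A) (u : L) (g g' : A) : Prop := g = ev u * g'

/-- The submonoid generated by the elements `x p * ι (ev u) * (x q)⁻¹` for the edges `p → q`
labelled `u`. -/
def edgeSubmonoid (ι : A →* H) (ev : L → A) (x : Q → H) (E : List (Q × L × Q)) : Submonoid H :=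
  Submonoid.closure {h | ∃ e ∈ E, x e.1 * ι (ev e.2.1) * (x e.2.2)⁻¹ = h}

variable {ev : L → A} {E : List (Q × L × Q)} {s f : Q} {g : A} {ι : A →* H} {x : Q → H}

theorem mem_edgeSubmonoid_of_reflTransGen
    (h : ReflTransGen (Step (Strip ev) E) (s, g) (f, 1)) :
    x s * ι g * (x f)⁻¹ ∈ edgeSubmonoid ι ev x E := by
  suffices ∀ c, ReflTransGen (Step (Strip ev) E) c (f, 1) →
      x c.1 * ι c.2 * (x f)⁻¹ ∈ edgeSubmonoid ι ev x E from this _ h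
  intro c hc
  induction hc using ReflTransGen.head_induction_on with
  | refl => simp
  | @head c d hstep _ ih =>
    obtain ⟨u, hu, hc⟩ := hstep
    have heq : x c.1 * ι c.2 * (x f)⁻¹ =
        x c.1 * ι (ev u) * (x d.1)⁻¹ * (x d.1 * ι d.2 * (x f)⁻¹) := by
      rw [hc, map_mul]
      group
    exact heq ▸ mul_mem (Submonoid.subset_closure ⟨_, hu, rfl⟩) ih

/-- Left translations of the group `A`, acting on the left factor of `A × ℤ`. -/
def leftPerm (A : Type*) [Group A] : A →* Equiv.Perm (A × ℤ) where
  toFun g := (Equiv.mulLeft g).prodCongr (Equiv.refl ℤ)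
  map_one' := by ext y <;> simp
  map_mul' _ _ := by ext y <;> simp [mul_assoc]

open Classical in
/-- The permutation of `A × ℤ` lowering the fibres over `S` by one. -/
noncomputable def lowerPerm (S : Set A) : Equiv.Perm (A × ℤ) where
  toFun y := (y.1, if y.1 ∈ S then y.2 - 1 else y.2)
  invFun y := (y.1, if y.1 ∈ S then y.2 + 1 else y.2)
  left_inv y := by grind
  right_inv y := by grind

open Classical in
theorem lowerPerm_mul_leftPerm_mul_lowerPerm_inv_apply (S T : Set A) (g : A) (y : A × ℤ) :
    (lowerPerm S * leftPerm A g * (lowerPerm T)⁻¹) y =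
      (g * y.1, y.2 + (if y.1 ∈ T then 1 else 0) - if g * y.1 ∈ S then 1 else 0) := by
  change (g * y.1, if g * y.1 ∈ S then (if y.1 ∈ T then y.2 + 1 else y.2) - 1
    else if y.1 ∈ T then y.2 + 1 else y.2) = _
  grind

/- The permutations preserving the half-space `{(y, n) | n < 0}` form a submonoid. It contains the
generators, since `ev u` maps the fibres over the elements accepted from `q` into those accepted
from `p`, so that no level is raised. -/
theorem reflTransGen_of_mem_edgeSubmonoid (π : H →* Equiv.Perm (A × ℤ))
    (hι : π.comp ι = leftPerm A)
    (hx : ∀ q, π (x q) = lowerPerm {g | ReflTransGen (Step (Strip ev) E) (q, g) (f, 1)})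
    (h : x s * ι g * (x f)⁻¹ ∈ edgeSubmonoid ι ev x E) :
    ReflTransGen (Step (Strip ev) E) (s, g) (f, 1) := by
  let S (q : Q) : Set A := {g | ReflTransGen (Step (Strip ev) E) (q, g) (f, 1)}
  have hπ (p q : Q) (g : A) : π (x p * ι g * (x q)⁻¹) =
      lowerPerm (S p) * leftPerm A g * (lowerPerm (S q))⁻¹ := by
    simp only [map_mul, map_inv, hx, ← hι, MonoidHom.comp_apply, S]
  have hpres (h : H) (hh : h ∈ edgeSubmonoid ι ev x E) (y : A × ℤ) (hy : y.2 < 0) :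
      (π h y).2 < 0 := by
    induction hh using Submonoid.closure_induction generalizing y with
    | mem h hh =>
      obtain ⟨⟨p, u, q⟩, hu, rfl⟩ := hh
      have hstep (hy : y.1 ∈ S q) : ev u * y.1 ∈ S p := .head (b := (q, y.1)) ⟨u, hu, rfl⟩ hy
      rw [hπ, lowerPerm_mul_leftPerm_mul_lowerPerm_inv_apply]
      grind
    | one => simpa
    | mul g h _ _ hg hh => simpa using hg _ (hh _ hy)
  have hneg := hpres _ h (1, -1) (by norm_num)
  have hf : 1 ∈ S f := .refl
  rw [hπ, lowerPerm_mul_leftPerm_mul_lowerPerm_inv_apply] at hneg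
  change g ∈ S s
  grind

end GroupAutomaton

/-! ### A group automaton computing with affine rules -/

/-- The states of `machine`: `count` for reading the number, `main` between two rule applications,
and `rule j` while the `j`-th of `m` rules is being applied. -/
inductive MachineState (m : ℕ)
  | count
  | main
  | rule (j : Fin m)
  deriving Fintype

/-- The word `zⁱ a z⁻ⁱ` in the letters `a = 0` and `z = 1`. -/
def conjWord (i : ℕ) : FreeMonoid (Fin 2 × Bool) :=
  .of (1, true) ^ i * .of (0, true) * wInv (.of (1, true) ^ i)

/-- The automaton over a group simulating the rules `J` with target `τ`. In the notation
`a, b, c, d` for the words `zⁱ a z⁻ⁱ`, `i < 4`, it rewrites `cⁿ` into the inverse of a product of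
blocks `a bⁿ cᵐ d`, with `(n, m)` subject to one of the rules, and a last block `a b^τ d`. -/
def machine (J : List AffineRule) (τ : ℕ) : List (MachineState J.length ×
    FreeMonoid (Fin 2 × Bool) × MachineState J.length) :=
  let a := conjWord 0
  let b := conjWord 1
  let c := conjWord 2
  let d := conjWord 3
  [(.count, b * c, .count), (.count, a * d, .count), (.count, wInv (a * b ^ τ * d), .main)] ++
    (List.finRange J.length).flatMap fun j =>
      [(.main, wInv (b ^ J[j].r * c ^ J[j].s * d), .rule j),
        (.rule j, wInv (b ^ J[j].p * c ^ J[j].q), .rule j),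
        (.rule j, wInv a, .main)]

section Machine

variable {A : Type*} [Group A] (v : Fin 2 → A)

/-- The value of `conjWord i`. -/
def conjGen (i : ℕ) : A := v 1 ^ i * v 0 * (v 1 ^ i)⁻¹

theorem evalWord_conjWord (i : ℕ) : evalWord v (conjWord i) = conjGen v i := by
  simp [conjWord, conjGen, evalWord_wInv]

/-- The value of the word `a bⁿ cᵐ d`, encoding a step from `n` to `m`. -/
def block (n m : ℕ) : A := conjGen v 0 * conjGen v 1 ^ n * conjGen v 2 ^ m * conjGen v 3

variable {v} {J : List AffineRule} {τ : ℕ}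

theorem commute_conjGen (hv : Commute (v 0) (conjGen v 1)) (i : ℕ) :
    Commute (conjGen v i) (conjGen v (i + 1)) := by
  have := hv.map (MulAut.conj (v 1 ^ i))
  simpa only [MulAut.conj_apply, conjGen, pow_succ, pow_zero, one_mul, mul_assoc, mul_inv_rev]
    using this

theorem block_eq (hv : Commute (v 0) (conjGen v 1)) (p q r s k : ℕ) :
    block v (p * k + r) (q * k + s) =
      conjGen v 0 * (conjGen v 1 ^ p * conjGen v 2 ^ q) ^ k *
        (conjGen v 1 ^ r * conjGen v 2 ^ s * conjGen v 3) := by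
  have h (m n : ℕ) := (commute_conjGen hv 1).pow_pow m n
  simp only [block, (h p q).mul_pow, ← pow_mul, pow_add, mul_assoc]
  rw [← mul_assoc (conjGen v 1 ^ r), (h r (q * k)).eq, mul_assoc]

/-- The elements of the group from which `machine` can reach the identity in its state `main`. -/
def Accepted (v : Fin 2 → A) (J : List AffineRule) (τ : ℕ) (q : MachineState J.length) (g : A) :
    Prop :=
  ReflTransGen (Step (Strip (evalWord v)) (machine J τ)) (q, g) (.main, 1)

theorem Accepted.head {p q : MachineState J.length} {u : FreeMonoid (Fin 2 × Bool)} {g : A}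
    (h : Accepted v J τ q g) (hu : (p, u, q) ∈ machine J τ) :
    Accepted v J τ p (evalWord v u * g) :=
  ReflTransGen.head (b := (q, g)) ⟨u, hu, rfl⟩ h

theorem accepted_count_pow {w : FreeMonoid (Fin 2 × Bool)}
    (hw : (.count, w, .count) ∈ machine J τ) {g : A} (h : Accepted v J τ .count g) (n : ℕ) :
    Accepted v J τ .count (evalWord v w ^ n * g) := by
  induction n with
  | zero => simpa
  | succ n ih => simpa [pow_succ', mul_assoc] using ih.head hw

theorem accepted_main_block_inv (hv : Commute (v 0) (conjGen v 1)) {n m : ℕ}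
    (hJ : RuleStep J n m) {g : A} (h : Accepted v J τ .main g) :
    Accepted v J τ .main ((block v n m)⁻¹ * g) := by
  obtain ⟨α, hα, k, rfl, rfl⟩ := hJ
  obtain ⟨j, hj, rfl⟩ := List.getElem_of_mem hα
  have hrule (k : ℕ) : Accepted v J τ (.rule ⟨j, hj⟩)
      (((conjGen v 1 ^ J[j].p * conjGen v 2 ^ J[j].q) ^ k)⁻¹ * (conjGen v 0)⁻¹ * g) := by
    induction k with
    | zero =>
      have := h.head (p := .rule ⟨j, hj⟩) (u := wInv (conjWord 0)) (by simp [machine])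
      simpa [evalWord_wInv, evalWord_conjWord] using this
    | succ k ih =>
      have := ih.head (p := .rule ⟨j, hj⟩)
        (u := wInv (conjWord 1 ^ J[j].p * conjWord 2 ^ J[j].q)) (by simp [machine])
      simpa [evalWord_wInv, evalWord_conjWord, pow_succ, mul_assoc] using this
  have := (hrule k).head (p := .main)
    (u := wInv (conjWord 1 ^ J[j].r * conjWord 2 ^ J[j].s * conjWord 3)) (by simp [machine])
  simpa [evalWord_wInv, evalWord_conjWord, block_eq hv, mul_assoc] using this

theorem pow_mul_block_inv (hv : Commute (v 0) (conjGen v 1)) (n m : ℕ) :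
    (conjGen v 1 * conjGen v 2) ^ n * (conjGen v 0 * conjGen v 3 * (conjGen v 2 ^ m *
      (block v n m)⁻¹)) = conjGen v 2 ^ n := by
  have hab := (commute_conjGen hv 0).pow_right n
  have hcd := (commute_conjGen hv 2).pow_left m
  have hblock : block v n m =
      conjGen v 1 ^ n * (conjGen v 0 * conjGen v 3 * conjGen v 2 ^ m) := by
    rw [block, hab.eq]
    simp only [mul_assoc, hcd.eq]
  rw [hblock, (commute_conjGen hv 1).eq, (commute_conjGen hv 1).symm.mul_pow]
  group

theorem accepted_count_of_reflTransGen (hv : Commute (v 0) (conjGen v 1)) {n : ℕ}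
    (hn : ReflTransGen (RuleStep J) n τ) {g : A} (h : Accepted v J τ .main g) :
    Accepted v J τ .count (conjGen v 2 ^ n * g) := by
  have hcount {n m : ℕ} {g : A}
      (h : Accepted v J τ .count (conjGen v 2 ^ m * ((block v n m)⁻¹ * g))) :
      Accepted v J τ .count (conjGen v 2 ^ n * g) := by
    have := accepted_count_pow (w := conjWord 1 * conjWord 2) (by simp [machine])
      (h.head (p := .count) (u := conjWord 0 * conjWord 3) (by simp [machine])) n
    simpa only [evalWord_conjWord, map_mul, ← mul_assoc, ← pow_mul_block_inv hv n m] using this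
  induction hn using ReflTransGen.head_induction_on generalizing g with
  | refl =>
    have := h.head (p := .count) (u := wInv (conjWord 0 * conjWord 1 ^ τ * conjWord 3))
      (by simp [machine])
    exact hcount (m := 0) (by simpa [evalWord_wInv, evalWord_conjWord, block, mul_assoc] using this)
  | head hstep _ ih => exact hcount (ih (accepted_main_block_inv hv hstep h))

/-- The product of the values of the words `a bⁿ cᵐ d` for the pairs `(n, m)` in `l`. -/
def blocks (v : Fin 2 → A) (l : List (ℕ × ℕ)) : A := (l.map fun x => block v x.1 x.2).prod

/-- The form of the elements from which `machine` can reach the identity in its state `main`. -/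
def NormalForm (v : Fin 2 → A) (J : List AffineRule) (τ : ℕ) :
    MachineState J.length → A → Prop
  | .count, g => ∃ h ∈ Submonoid.closure {conjGen v 1 * conjGen v 2, conjGen v 0 * conjGen v 3},
      ∃ l, (∀ x ∈ l, RuleStep J x.1 x.2) ∧ g = h * (blocks v l * block v τ 0)⁻¹
  | .main, g => ∃ l, (∀ x ∈ l, RuleStep J x.1 x.2) ∧ g = (blocks v l)⁻¹
  | .rule j, g => ∃ l, (∀ x ∈ l, RuleStep J x.1 x.2) ∧ ∃ k,
      g = (blocks v l * conjGen v 0 * (conjGen v 1 ^ J[j].p * conjGen v 2 ^ J[j].q) ^ k)⁻¹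

theorem NormalForm.head (hv : Commute (v 0) (conjGen v 1)) {p q : MachineState J.length}
    {u : FreeMonoid (Fin 2 × Bool)} (hu : (p, u, q) ∈ machine J τ) {g : A}
    (hg : NormalForm v J τ q g) : NormalForm v J τ p (evalWord v u * g) := by
  simp only [machine, List.mem_append, List.mem_cons, List.mem_flatMap, List.not_mem_nil, or_false,
    Prod.mk.injEq, List.mem_finRange, true_and] at hu
  obtain (⟨rfl, rfl, rfl⟩ | ⟨rfl, rfl, rfl⟩ | ⟨rfl, rfl, rfl⟩) |
    ⟨j, ⟨rfl, rfl, rfl⟩ | ⟨rfl, rfl, rfl⟩ | ⟨rfl, rfl, rfl⟩⟩ := hu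
  · obtain ⟨h, hh, l, hl, rfl⟩ := hg
    refine ⟨_, mul_mem (Submonoid.subset_closure (.inl rfl)) hh, l, hl, ?_⟩
    simp only [map_mul, evalWord_conjWord, mul_assoc]
  · obtain ⟨h, hh, l, hl, rfl⟩ := hg
    refine ⟨_, mul_mem (Submonoid.subset_closure (.inr rfl)) hh, l, hl, ?_⟩
    simp only [map_mul, evalWord_conjWord, mul_assoc]
  · obtain ⟨l, hl, rfl⟩ := hg
    refine ⟨1, one_mem _, l, hl, ?_⟩
    simp [evalWord_wInv, evalWord_conjWord, block, mul_assoc]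
  · obtain ⟨l, hl, k, rfl⟩ := hg
    refine ⟨l ++ [(J[j].p * k + J[j].r, J[j].q * k + J[j].s)], ?_, ?_⟩
    · have hstep : RuleStep J (J[j].p * k + J[j].r) (J[j].q * k + J[j].s) :=
        ⟨J[j], List.getElem_mem _, k, rfl, rfl⟩
      exact List.forall_mem_append.2 ⟨hl, List.forall_mem_singleton.2 hstep⟩
    · simp [evalWord_wInv, evalWord_conjWord, blocks, block_eq hv, mul_assoc]
  · obtain ⟨l, hl, k, rfl⟩ := hg
    refine ⟨l, hl, k + 1, ?_⟩
    simp [evalWord_wInv, evalWord_conjWord, pow_succ, mul_assoc]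
  · obtain ⟨l, hl, rfl⟩ := hg
    refine ⟨l, hl, 0, ?_⟩
    simp [evalWord_wInv, evalWord_conjWord]

theorem Accepted.normalForm (hv : Commute (v 0) (conjGen v 1)) {q : MachineState J.length} {g : A}
    (h : Accepted v J τ q g) : NormalForm v J τ q g := by
  suffices ∀ c, ReflTransGen (Step (Strip (evalWord v)) (machine J τ)) c (.main, 1) →
      NormalForm v J τ c.1 c.2 from this _ h
  intro c hc
  induction hc using ReflTransGen.head_induction_on with
  | refl => exact ⟨[], by simp, by simp [blocks]⟩
  | head hstep _ ih =>
    obtain ⟨u, hu, hg⟩ := hstep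
    exact hg ▸ ih.head hv hu

theorem Accepted.map {A' : Type*} [Group A'] {q : MachineState J.length} {g : A}
    (h : Accepted v J τ q g) (κ : A →* A') : Accepted (κ ∘ v) J τ q (κ g) := by
  have hstep : ∀ c d, Step (Strip (evalWord v)) (machine J τ) c d →
      Step (Strip (evalWord (κ ∘ v))) (machine J τ) (c.1, κ c.2) (d.1, κ d.2) := by
    rintro c d ⟨u, hu, hg⟩
    exact ⟨u, hu, by rw [Strip, hg, map_mul, map_evalWord fun _ => map_inv κ _]⟩
  have hlift : ReflTransGen _ (q, κ g) (.main, κ 1) := ReflTransGen.lift _ hstep _ _ h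
  rwa [map_one] at hlift

end Machine

section PositiveWord

variable {α : Type*}

/-- The element of the free group spelled by a word without inverses. -/
def positiveWord (l : List α) : FreeGroup α := .mk (l.map (·, true))

theorem positiveWord_injective : Function.Injective (positiveWord (α := α)) := by
  classical
  intro l l' h
  have hred (l : List α) : FreeGroup.IsReduced (l.map (·, true)) :=
    (List.pairwise_map.2 (List.pairwise_of_forall fun _ _ _ => rfl)).isChain
  have := congrArg FreeGroup.toWord h
  simp only [positiveWord, FreeGroup.toWord_mk, (hred _).reduce_eq] at this
  exact List.map_injective_iff.2 (Prod.mk_left_injective true) this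

theorem of_mul_positiveWord (a : α) (l : List α) :
    .of a * positiveWord l = positiveWord (a :: l) := rfl

theorem of_pow_mul_positiveWord (a : α) (n : ℕ) (l : List α) :
    .of a ^ n * positiveWord l = positiveWord (List.replicate n a ++ l) := by
  induction n with
  | zero => simp
  | succ n ih => rw [pow_succ', mul_assoc, ih, of_mul_positiveWord]; rfl

theorem replicate_append_cons_inj {a b : α} (hab : a ≠ b) {n m : ℕ} {l l' : List α}
    (h : List.replicate n a ++ b :: l = List.replicate m a ++ b :: l') : n = m ∧ l = l' := by
  induction n generalizing m with
  | zero => cases m <;> simp_all [List.replicate_succ, eq_comm]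
  | succ n ih => cases m <;> simp_all [List.replicate_succ]

end PositiveWord

section Twist

theorem toPerm_mul_mulLeft_mul_toPerm_inv {A : Type*} [Group A] (φ : MulAut A) (g : A) :
    MulAut.toPerm A φ * Equiv.mulLeft g * (MulAut.toPerm A φ)⁻¹ = Equiv.mulLeft (φ g) := by
  ext y
  change φ (g * φ⁻¹ y) = φ g * y
  rw [map_mul, MulAut.apply_inv_self]

/-- The automorphism `(g, h) ↦ (h, θ g)` of the square of the free group on two generators, where
`θ` exchanges the generators. -/
def twist : MulAut (FreeGroup Bool × FreeGroup Bool) :=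
  MulEquiv.prodComm.trans ((MulEquiv.refl _).prodCongr (FreeGroup.freeGroupCongr Equiv.boolNot))

/-- Permutations satisfying the commutation of `a` with `z a z⁻¹` for which the four elements
`zⁱ a z⁻ⁱ` are the translations by `(p, 1)`, `(1, q)`, `(q, 1)` and `(1, p)`, where `p` and `q` are
the free generators `true` and `false`. -/
def twistGen : Fin 2 → Equiv.Perm (FreeGroup Bool × FreeGroup Bool) :=
  ![Equiv.mulLeft (.of true, 1), MulAut.toPerm _ twist]

theorem conjGen_twistGen (i : ℕ) :
    conjGen twistGen i = Equiv.mulLeft ((twist ^ i) (.of true, 1)) := by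
  rw [← toPerm_mul_mulLeft_mul_toPerm_inv, map_pow]
  rfl

theorem conjGen_twistGen_zero : conjGen twistGen 0 = Equiv.mulLeft (.of true, 1) :=
  conjGen_twistGen 0

theorem conjGen_twistGen_one : conjGen twistGen 1 = Equiv.mulLeft (1, .of false) :=
  conjGen_twistGen 1

theorem conjGen_twistGen_two : conjGen twistGen 2 = Equiv.mulLeft (.of false, 1) :=
  conjGen_twistGen 2

theorem conjGen_twistGen_three : conjGen twistGen 3 = Equiv.mulLeft (1, .of true) :=
  conjGen_twistGen 3

theorem commute_twistGen : Commute (twistGen 0) (conjGen twistGen 1) := by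
  rw [conjGen_twistGen_one]
  ext y <;> simp [twistGen]

theorem block_twistGen_apply (n m : ℕ) (u w : List Bool) :
    block twistGen n m (positiveWord u, positiveWord w) =
      (positiveWord (true :: (List.replicate m false ++ u)),
        positiveWord (List.replicate n false ++ true :: w)) := by
  simp [block, conjGen_twistGen_zero, conjGen_twistGen_one, conjGen_twistGen_two,
    conjGen_twistGen_three, mul_assoc, of_mul_positiveWord, of_pow_mul_positiveWord]

variable {J : List AffineRule} {τ : ℕ}

theorem exists_blocks_twistGen_apply {l : List (ℕ × ℕ)} (hl : ∀ x ∈ l, RuleStep J x.1 x.2) :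
    ∃ u w, (blocks twistGen l * block twistGen τ 0) 1 = (positiveWord u, positiveWord w) ∧
      ∀ n, List.replicate n false ++ u = w → ReflTransGen (RuleStep J) n τ := by
  induction l with
  | nil =>
    refine ⟨_, _, block_twistGen_apply τ 0 [] [], fun n h => ?_⟩
    rw [(replicate_append_cons_inj Bool.false_ne_true h).1]
  | cons x l ih =>
    obtain ⟨hx, hl⟩ := List.forall_mem_cons.1 hl
    obtain ⟨u, w, huw, hrun⟩ := ih hl
    refine ⟨true :: (List.replicate x.2 false ++ u), List.replicate x.1 false ++ true :: w,
      ?_, fun n h => ?_⟩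
    · rw [blocks, List.map_cons, List.prod_cons, mul_assoc, Equiv.Perm.mul_apply,
        ← block_twistGen_apply]
      exact congrArg _ huw
    · obtain ⟨rfl, hw⟩ := replicate_append_cons_inj Bool.false_ne_true h
      exact .head hx (hrun _ hw)

theorem closure_twistGen_apply {h : Equiv.Perm (FreeGroup Bool × FreeGroup Bool)}
    (hh : h ∈ Submonoid.closure {conjGen twistGen 1 * conjGen twistGen 2,
      conjGen twistGen 0 * conjGen twistGen 3}) (g : FreeGroup Bool) :
    (h (g, g)).1 = (h (g, g)).2 := by
  induction hh using Submonoid.closure_induction generalizing g with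
  | mem h hh =>
    obtain rfl | rfl := hh <;> simp [conjGen_twistGen_zero, conjGen_twistGen_one,
      conjGen_twistGen_two, conjGen_twistGen_three]
  | one => rfl
  | mul h₁ h₂ _ _ ih₁ ih₂ =>
    have hpair : h₂ (g, g) = ((h₂ (g, g)).1, (h₂ (g, g)).1) := Prod.ext rfl (ih₂ g).symm
    rw [Equiv.Perm.mul_apply, hpair]
    exact ih₁ _

theorem reflTransGen_of_accepted_twistGen {n : ℕ}
    (h : Accepted twistGen J τ .count (conjGen twistGen 2 ^ n)) :
    ReflTransGen (RuleStep J) n τ := by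
  obtain ⟨h, hh, l, hl, heq⟩ := h.normalForm commute_twistGen
  obtain ⟨u, w, huw, hrun⟩ := exists_blocks_twistGen_apply (τ := τ) hl
  have happly : (conjGen twistGen 2 ^ n) (positiveWord u, positiveWord w) = h 1 := by
    rw [heq, ← huw, ← Equiv.Perm.mul_apply, inv_mul_cancel_right]
  have hdiag := closure_twistGen_apply hh 1
  change (h 1).1 = (h 1).2 at hdiag
  rw [← happly, conjGen_twistGen_two] at hdiag
  refine hrun n (positiveWord_injective ?_)
  simpa [of_pow_mul_positiveWord] using hdiag

end Twist

section CommutatorWord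

/-- The word `[a, z a z⁻¹]` in the letters `a = 0` and `z = 1`. -/
def commutatorWord : FreeMonoid (Fin 2 × Bool) :=
  conjWord 0 * conjWord 1 * (wInv (conjWord 0) * wInv (conjWord 1))

theorem evalWord_commutatorWord_eq_one_iff {A : Type*} [Group A] {v : Fin 2 → A} :
    evalWord v commutatorWord = 1 ↔ Commute (v 0) (conjGen v 1) := by
  have h₀ : conjGen v 0 = v 0 := by simp [conjGen]
  simp only [commutatorWord, map_mul, evalWord_wInv, evalWord_conjWord, h₀]
  rw [← mul_inv_rev, mul_inv_eq_one]
  rfl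

theorem accepted_count_iff {J : List AffineRule} {τ n : ℕ} :
    Accepted (PresentedGroup.of : Fin 2 → OneRelatorGroup commutatorWord) J τ .count
      (evalWord .of (conjWord 2 ^ n)) ↔ ReflTransGen (RuleStep J) n τ := by
  rw [map_pow, evalWord_conjWord]
  refine ⟨fun h => ?_, fun h => ?_⟩
  · obtain ⟨κ, hκ⟩ := exists_oneRelatorGroup_hom (f := twistGen)
      (by simp [InverseMonoid.mem_rightUnits])
      (evalWord_commutatorWord_eq_one_iff.2 commute_twistGen)
    have hκ : κ ∘ PresentedGroup.of = twistGen := funext hκ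
    have hn := h.map κ
    rw [map_pow, ← evalWord_conjWord, map_evalWord fun _ => map_inv κ _, hκ, evalWord_conjWord]
      at hn
    exact reflTransGen_of_accepted_twistGen hn
  · have hv := evalWord_commutatorWord_eq_one_iff.1 (evalWord_of_eq_one commutatorWord)
    have := accepted_count_of_reflTransGen hv h (g := 1) .refl
    rwa [mul_one] at this

end CommutatorWord

/-! ### From group automata to submonoid membership in a one-relator group -/

section StateLetters

variable {Q : Type*} [Finite Q] {m : ℕ}

/-- The word `p u q⁻¹` for states `p` and `q`, which are numbered from `m` on. -/
noncomputable def edgeWord (e : Q × FreeMonoid (Fin m × Bool) × Q) :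
    FreeMonoid (Fin (m + Nat.card Q) × Bool) :=
  .of (Fin.natAdd m (Finite.equivFin Q e.1), true) * renameWord (Fin.castAdd _) e.2.1 *
    wInv (.of (Fin.natAdd m (Finite.equivFin Q e.2.2), true))

theorem evalWord_edgeWord {G : Type*} [Group G] (f : Fin (m + Nat.card Q) → G)
    (e : Q × FreeMonoid (Fin m × Bool) × Q) :
    evalWord f (edgeWord e) = f (Fin.natAdd m (Finite.equivFin Q e.1)) *
      evalWord (fun i => f (Fin.castAdd _ i)) e.2.1 *
        (f (Fin.natAdd m (Finite.equivFin Q e.2.2)))⁻¹ := by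
  simp [edgeWord, evalWord_wInv, evalWord_renameWord]

variable {r : FreeMonoid (Fin m × Bool)}

theorem exists_oneRelatorGroup_hom_renameWord {k : ℕ} (h : Fin m → Fin k) :
    ∃ ι : OneRelatorGroup r →* OneRelatorGroup (renameWord h r), ∀ i, ι (.of i) = .of (h i) :=
  exists_oneRelatorGroup_hom (by simp [InverseMonoid.mem_rightUnits])
    (by rw [← evalWord_renameWord]; exact evalWord_of_eq_one _)

theorem exists_oneRelatorGroup_hom_castAdd {G : Type*} [Group G] (κ : OneRelatorGroup r →* G)
    (x : Q → G) :
    ∃ π : OneRelatorGroup (renameWord (Fin.castAdd (Nat.card Q)) r) →* G,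
      (∀ i, π (.of (Fin.castAdd _ i)) = κ (.of i)) ∧
        ∀ q, π (.of (Fin.natAdd m (Finite.equivFin Q q))) = x q := by
  let f := Fin.append (fun i => κ (.of i)) fun j => x ((Finite.equivFin Q).symm j)
  have hf : evalWord f (renameWord (Fin.castAdd (Nat.card Q)) r) = 1 := by
    simp only [evalWord_renameWord, f, Fin.append_left]
    exact (map_evalWord (fun _ => map_inv _ _) r).symm.trans (by rw [evalWord_of_eq_one, map_one])
  obtain ⟨π, hπ⟩ := exists_oneRelatorGroup_hom (by simp [InverseMonoid.mem_rightUnits]) hf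
  exact ⟨π, fun i => by simp [hπ, f], fun q => by simp [hπ, f]⟩

theorem edgeWord_mem_wordSubmonoid_iff {E : List (Q × FreeMonoid (Fin m × Bool) × Q)} {s f : Q}
    {v : FreeMonoid (Fin m × Bool)} :
    evalWord .of (edgeWord (s, v, f)) ∈
        wordSubmonoid (renameWord (Fin.castAdd (Nat.card Q)) r) (E.map edgeWord) ↔
      ReflTransGen (Step (Strip (evalWord (PresentedGroup.of : Fin m → OneRelatorGroup r))) E)
        (s, evalWord .of v) (f, 1) := by
  obtain ⟨ι, hι⟩ := exists_oneRelatorGroup_hom_renameWord (r := r) (Fin.castAdd (Nat.card Q))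
  let x (q : Q) : OneRelatorGroup (renameWord (Fin.castAdd (Nat.card Q)) r) :=
    .of (Fin.natAdd m (Finite.equivFin Q q))
  have hedge (e : Q × FreeMonoid (Fin m × Bool) × Q) :
      evalWord .of (edgeWord e) = x e.1 * ι (evalWord .of e.2.1) * (x e.2.2)⁻¹ := by
    rw [evalWord_edgeWord, map_evalWord fun _ => map_inv ι _]
    exact congrArg (_ * evalWord · _ * _) (funext fun i => (hι i).symm)
  have hsub : wordSubmonoid (renameWord (Fin.castAdd (Nat.card Q)) r) (E.map edgeWord) =
      edgeSubmonoid ι (evalWord .of) x E := by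
    refine congrArg Submonoid.closure (Set.ext fun h => ?_)
    simp only [Set.mem_image, Set.mem_ofPred_eq, List.mem_map, exists_exists_and_eq_and, ← hedge]
  rw [hsub, hedge]
  refine ⟨fun h => ?_, mem_edgeSubmonoid_of_reflTransGen⟩
  obtain ⟨π, hleft, hlower⟩ := exists_oneRelatorGroup_hom_castAdd (leftPerm (OneRelatorGroup r))
    fun q : Q => lowerPerm {g | ReflTransGen (Step (Strip (evalWord .of)) E) (q, g) (f, 1)}
  refine reflTransGen_of_mem_edgeSubmonoid π (PresentedGroup.ext fun i => ?_) hlower h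
  rw [MonoidHom.comp_apply, hι, hleft]

end StateLetters

/-! ### Reduction of the halting problem -/

section Reduction

variable {α B : Type*} [Primcodable α] [Primcodable B]

theorem primrec₂_freeMonoid_mul : Primrec₂ fun u v : FreeMonoid α => u * v :=
  (Primrec.of_equiv_symm (e := FreeMonoid.toList)).comp <| Primrec.list_append.comp
    (Primrec.of_equiv.comp .fst) (Primrec.of_equiv.comp .snd)

theorem primrec_freeMonoid_pow (u : FreeMonoid α) : Primrec fun n => u ^ n :=
  (Primrec.nat_rec₁ 1 (primrec₂_freeMonoid_mul.comp .snd (.const u)).to₂).of_eq fun n => by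
    induction n with
    | zero => rfl
    | succ n ih => rw [pow_succ, ← ih]

theorem primrec_wInv : Primrec (wInv (B := B)) :=
  Primrec.of_equiv_symm.comp <| Primrec.list_reverse.comp <| Primrec.list_map Primrec.of_equiv <|
    (Primrec.pair (.comp .fst .snd) (Primrec.not.comp (.comp .snd .snd))).to₂

theorem primrec_two_pow : Primrec fun n : ℕ => 2 ^ n :=
  (Primrec.nat_rec₁ 1 (Primrec.nat_mul.comp .snd (.const 2)).to₂).of_eq fun n => by
    induction n with
    | zero => rfl
    | succ n ih => rw [pow_succ, ← ih]

theorem primrec_stableConj_edgeWord_pow {Q : Type*} [Finite Q] {m : ℕ} (s f : Q)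
    (u : FreeMonoid (Fin m × Bool)) : Primrec fun n => stableConj (edgeWord (s, u ^ n, f)) := by
  simp only [stableConj, edgeWord, map_mul, map_pow]
  have hmul {g h : ℕ → FreeMonoid (Fin (m + Nat.card Q + 1) × Bool)} (hg : Primrec g)
      (hh : Primrec h) : Primrec fun n => g n * h n := primrec₂_freeMonoid_mul.comp hg hh
  exact hmul (hmul (.const _) (hmul (hmul (.const _) (primrec_freeMonoid_pow _)) (.const _)))
    (.const _)

/-- The one-relator inverse monoid deciding acceptance by `machine J τ`. -/
noncomputable def machineRelator (J : List AffineRule) (τ : ℕ) :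
    FreeMonoid (Fin (2 + Nat.card (MachineState J.length) + 1) × Bool) :=
  grayRelator (renameWord (Fin.castAdd _) commutatorWord) ((machine J τ).map edgeWord)

theorem oneRelatorInvCon_machineRelator_iff {J : List AffineRule} {τ n : ℕ} :
    let q := stableConj (edgeWord (.count, conjWord 2 ^ n, .main))
    oneRelatorInvCon (machineRelator J τ) (q * wInv q) 1 ↔ ReflTransGen (RuleStep J) n τ :=
  oneRelatorInvCon_stableConj_iff.trans <| edgeWord_mem_wordSubmonoid_iff.trans accepted_count_iff

theorem not_computablePred_machineRelator {J : List AffineRule} {N s τ : ℕ}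
    (hJ : ¬ ComputablePred fun n => ReflTransGen (RuleStep J) (N * 2 ^ n + s) τ) :
    ¬ ComputablePred fun p : FreeMonoid (Fin _ × Bool) × FreeMonoid (Fin _ × Bool) =>
      oneRelatorInvCon (machineRelator J τ) p.1 p.2 := by
  refine fun hc => hJ (ComputablePred.computable_of_manyOneReducible ?_ hc)
  have hexp : Primrec fun n => N * 2 ^ n + s :=
    Primrec.nat_add.comp (Primrec.nat_mul.comp (.const N) primrec_two_pow) (.const s)
  have hq := (primrec_stableConj_edgeWord_pow (MachineState.count (m := J.length)) .main
    (conjWord 2)).comp hexp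
  have hquery := primrec₂_freeMonoid_mul.comp hq (primrec_wInv.comp hq)
  exact ⟨_, (hquery.pair (.const 1)).to_comp, fun n => oneRelatorInvCon_machineRelator_iff.symm⟩

end Reduction

end OneRelatorInverseMonoid

/-- There is an `E`-unitary one-relator inverse monoid `Inv⟨A | w = 1⟩` with undecidable word
problem: the word problem of `Inv⟨A | w = 1⟩` is undecidable and every word whose image in the
maximal group image `Gp⟨A | w = 1⟩` is trivial represents an idempotent. -/
theorem exists_eUnitary_oneRelator_invMonoid_undecidable_wordProblem :
    ∃ (n : ℕ) (w : FreeMonoid (Fin n × Bool)),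
      (¬ ComputablePred
        (fun p : FreeMonoid (Fin n × Bool) × FreeMonoid (Fin n × Bool) =>
          oneRelatorInvCon w p.1 p.2)) ∧
      (∀ u : FreeMonoid (Fin n × Bool),
        FreeGroup.mk (FreeMonoid.toList u) ∈
            Subgroup.normalClosure {FreeGroup.mk (FreeMonoid.toList w)} →
          oneRelatorInvCon w (u * u) u) := by
  obtain ⟨J, N, s, τ, hJ⟩ := OneRelatorInverseMonoid.exists_rules_not_computablePred
  exact ⟨_, OneRelatorInverseMonoid.machineRelator J τ,
    OneRelatorInverseMonoid.not_computablePred_machineRelator hJ,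
    fun _ => OneRelatorInverseMonoid.oneRelatorInvCon_grayRelator_mul_self⟩
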